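/- arXiv:1011.4927 — 3 statements merged into one kernel-verified Lean document; each statement's English description precedes it below -/
import Mathlib

section
/- Let ν, d ≥ 1 and let M ⊆ M_ν(ℝ[x₁,…,x_d]) be an archimedean quadratic module (with respect to the involution F ↦ Fᵀ). Set K_M = {(a, v) ∈ ℝ^d × ℝ^ν : vᵀ G(a) v ≥ 0 for every G ∈ M}. Then for every F ∈ M_ν(ℝ[x₁,…,x_d]) with Fᵀ = F the following are equivalent: (i) vᵀ F(a) v ≥ 0 for every pair (a, v) ∈ K_M; (ii) for every real ε > 0, F + ε·I_ν ∈ M. -/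
open MvPolynomial Matrix

/-- A quadratic module in `M_ν(ℝ[x₁,…,x_d])` with respect to the involution `F ↦ Fᵀ`. -/
def IsMatPolyQuadraticModule (ν d : ℕ)
    (M : Set (Matrix (Fin ν) (Fin ν) (MvPolynomial (Fin d) ℝ))) : Prop :=
  (1 : Matrix (Fin ν) (Fin ν) (MvPolynomial (Fin d) ℝ)) ∈ M ∧
  (∀ a ∈ M, ∀ b ∈ M, a + b ∈ M) ∧
  (∀ m ∈ M, ∀ G : Matrix (Fin ν) (Fin ν) (MvPolynomial (Fin d) ℝ), Gᵀ * m * G ∈ M)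

/-- The quadratic module `M` is archimedean. -/
def IsMatPolyArchimedean (ν d : ℕ)
    (M : Set (Matrix (Fin ν) (Fin ν) (MvPolynomial (Fin d) ℝ))) : Prop :=
  ∀ F : Matrix (Fin ν) (Fin ν) (MvPolynomial (Fin d) ℝ), Fᵀ = F →
    ∃ n : ℕ, (n : ℕ) • (1 : Matrix (Fin ν) (Fin ν) (MvPolynomial (Fin d) ℝ)) - F ∈ M

/-- The normalized positive linear functionals on `E` for the cone `C` and the order unit `e`. -/
def coneStates {E : Type*} [AddCommGroup E] [Module ℝ E] (C : PointedCone ℝ E) (e : E) :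
    Set (E → ℝ) :=
  {φ | (∃ L : E →ₗ[ℝ] ℝ, ⇑L = φ) ∧ (∀ m ∈ C, 0 ≤ φ m) ∧ φ e = 1}

/-- A nonnegative log-convex sequence growing at most like `N ^ k` satisfies `a 1 ≤ N * a 0`. -/
theorem le_mul_of_logConvex_of_le_pow {a : ℕ → ℝ} {c N : ℝ} (hN : 0 < N)
    (h0 : ∀ k, 0 ≤ a k) (hlc : ∀ k, a (k + 1) ^ 2 ≤ a k * a (k + 2))
    (hgrow : ∀ k, a k ≤ c * N ^ k) : a 1 ≤ N * a 0 := by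
  by_contra! hlt
  have ha1 : 0 < a 1 := lt_of_le_of_lt (mul_nonneg hN.le (h0 0)) hlt
  have ha0 : 0 < a 0 := by
    rcases (h0 0).eq_or_lt with h | h
    · have := hlc 0
      rw [← h] at this
      simp only [zero_add, zero_mul] at this
      nlinarith
    · exact h
  set r := a 1 / a 0 with hr
  have hNr : N < r := by rwa [hr, lt_div_iff₀ ha0]
  have hr0 : 0 < r := hN.trans hNr
  have key : ∀ k, 0 < a k ∧ r * a k ≤ a (k + 1) := by
    intro k
    induction k with
    | zero => exact ⟨ha0, by rw [hr, div_mul_cancel₀ _ ha0.ne']⟩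
    | succ k ih =>
      obtain ⟨hk, hk1⟩ := ih
      have hpos : 0 < a (k + 1) := lt_of_lt_of_le (mul_pos hr0 hk) hk1
      refine ⟨hpos, ?_⟩
      have h1 := hlc k
      have h2 : r * a k * a (k + 1) ≤ a (k + 1) * a (k + 1) :=
        mul_le_mul_of_nonneg_right hk1 hpos.le
      have h3 : a k * (r * a (k + 1)) ≤ a k * a (k + 2) := by nlinarith
      exact le_of_mul_le_mul_left h3 hk
  have hgeo : ∀ k, a 0 * r ^ k ≤ a k := by
    intro k
    induction k with
    | zero => simp
    | succ k ih =>
      calc a 0 * r ^ (k + 1) = r * (a 0 * r ^ k) := by ring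
        _ ≤ r * a k := mul_le_mul_of_nonneg_left ih hr0.le
        _ ≤ a (k + 1) := (key k).2
  obtain ⟨k, hk⟩ := pow_unbounded_of_one_lt (c / a 0) ((one_lt_div hN).2 hNr)
  have h1 : a 0 * r ^ k ≤ c * N ^ k := (hgeo k).trans (hgrow k)
  rw [div_pow, div_lt_div_iff₀ ha0 (pow_pos hN k)] at hk
  linarith [mul_comm (a 0) (r ^ k)]

section ConeStates

variable {E : Type*} [AddCommGroup E] [Module ℝ E] {C : PointedCone ℝ E} {e : E}

theorem convex_coneStates : Convex ℝ (coneStates C e) := by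
  rintro _ ⟨⟨L, rfl⟩, hL, hLe⟩ _ ⟨⟨L', rfl⟩, hL', hLe'⟩ s t hs ht hst
  refine ⟨⟨s • L + t • L', rfl⟩, fun m hm => ?_, ?_⟩
  · have h1 := mul_nonneg hs (hL m hm)
    have h2 := mul_nonneg ht (hL' m hm)
    simpa using add_nonneg h1 h2
  · simp [hLe, hLe', hst]

theorem isCompact_coneStates (hunit : ∀ x : E, ∃ n : ℕ, n • e - x ∈ C) :
    IsCompact (coneStates C e) := by
  choose b hb using hunit
  refine (isCompact_univ_pi fun x : E =>
    isCompact_Icc (a := -(b (-x) : ℝ)) (b := (b x : ℝ))).of_isClosed_subset ?_ ?_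
  · have h1 : IsClosed (Set.range ((↑) : (E →ₗ[ℝ] ℝ) → E → ℝ)) :=
      LinearMap.isClosed_range_coe E ℝ (RingHom.id ℝ)
    have h2 : IsClosed {φ : E → ℝ | ∀ m ∈ C, 0 ≤ φ m} := by
      simp only [Set.ofPred_forall]
      exact isClosed_iInter fun m => isClosed_iInter fun _ =>
        isClosed_le continuous_const (continuous_apply m)
    have h3 : IsClosed {φ : E → ℝ | φ e = 1} :=
      isClosed_eq (continuous_apply e) continuous_const
    exact h1.inter (h2.inter h3)
  · rintro _ ⟨⟨L, rfl⟩, hL, hLe⟩ x -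
    have h1 := hL _ (hb x)
    have h2 := hL _ (hb (-x))
    simp only [map_sub, map_nsmul, map_neg, hLe, nsmul_eq_mul, mul_one] at h1 h2
    exact ⟨by linarith, by linarith⟩

/-- An element outside a cone with an order unit is nonpositive at some state. -/
theorem exists_coneState_nonpos (hunit : ∀ x : E, ∃ n : ℕ, n • e - x ∈ C) (he : e ∈ C)
    {x : E} (hx : x ∉ C) : ∃ φ ∈ coneStates C e, φ x ≤ 0 := by
  have smul_mem : ∀ {c : ℝ} {y : E}, 0 ≤ c → y ∈ C → c • y ∈ C := fun {c y} hc hy =>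
    C.smul_mem hc hy
  have hne : ∀ c : ℝ, 0 < c → -(c • e) ∉ C := by
    intro c hc h
    have h1 : -e ∈ C := by
      have := smul_mem (inv_nonneg.2 hc.le) h
      rwa [smul_neg, smul_smul, inv_mul_cancel₀ hc.ne', one_smul] at this
    obtain ⟨n, hn⟩ := hunit (-x)
    have h2 := C.add_mem hn (smul_mem (Nat.cast_nonneg n : (0 : ℝ) ≤ n) h1)
    apply hx
    convert h2 using 1
    rw [smul_neg, Nat.cast_smul_eq_nsmul]
    abel
  have he0 : e ≠ 0 := by
    rintro rfl
    exact hne 1 one_pos (by simp)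
  let s : PointedCone ℝ E :=
    { carrier := {y | ∃ m ∈ C, ∃ c : ℝ, 0 ≤ c ∧ y = m - c • x}
      zero_mem' := ⟨0, C.zero_mem, 0, le_rfl, by simp⟩
      add_mem' := by
        rintro _ _ ⟨m, hm, c, hc, rfl⟩ ⟨m', hm', c', hc', rfl⟩
        exact ⟨m + m', C.add_mem hm hm', c + c', add_nonneg hc hc', by rw [add_smul]; abel⟩
      smul_mem' := by
        rintro ⟨t, ht⟩ _ ⟨m, hm, c, hc, rfl⟩
        refine ⟨t • m, smul_mem ht hm, t * c, mul_nonneg ht hc, ?_⟩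
        change t • (m - c • x) = _
        rw [smul_sub, smul_smul] }
  have hCs : ∀ m ∈ C, m ∈ s := fun m hm => ⟨m, hm, 0, le_rfl, by simp⟩
  have happ : ∀ (t : ℝ) (h : t • e ∈ (LinearPMap.mkSpanSingleton e (1 : ℝ) he0 :
      E →ₗ.[ℝ] ℝ).domain), (LinearPMap.mkSpanSingleton e (1 : ℝ) he0 : E →ₗ.[ℝ] ℝ) ⟨t • e, h⟩ = t := by
    intro t h
    have := LinearPMap.mkSpanSingleton'_apply (σ := RingHom.id ℝ) e (1 : ℝ)
      (fun c hc => by simp [(smul_eq_zero.1 hc).resolve_right he0]) t h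
    simpa using this
  obtain ⟨g, hg, hgs⟩ := riesz_extension s
    (LinearPMap.mkSpanSingleton e (1 : ℝ) he0 : E →ₗ.[ℝ] ℝ) (by
      rintro ⟨y, hy⟩ hys
      obtain ⟨t, rfl⟩ := Submodule.mem_span_singleton.1 hy
      rw [happ]
      by_contra! ht
      obtain ⟨m, hm, c, hc, hmc⟩ := hys
      have hcx : c • x = m + (-t) • e := by
        rw [neg_smul]
        change t • e = m - c • x at hmc
        rw [← sub_eq_add_neg, hmc]
        abel
      rcases hc.eq_or_lt with rfl | hc
      · apply hne (-t) (by linarith)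
        rw [zero_smul] at hcx
        rwa [← eq_neg_of_add_eq_zero_left hcx.symm]
      · apply hx
        have := smul_mem (inv_nonneg.2 hc.le) (C.add_mem hm (smul_mem (by linarith : 0 ≤ -t) he))
        rwa [← hcx, smul_smul, inv_mul_cancel₀ hc.ne', one_smul] at this) (by
      intro y
      obtain ⟨n, hn⟩ := hunit (-y)
      refine ⟨⟨n • e, ?_⟩, ?_⟩
      · exact Submodule.smul_of_tower_mem _ n (Submodule.mem_span_singleton_self e)
      · apply hCs
        simpa using hn)
  refine ⟨g, ⟨⟨g, rfl⟩, fun m hm => hgs m (hCs m hm), ?_⟩, ?_⟩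
  · have h := hg ⟨(1 : ℝ) • e, Submodule.smul_mem _ _ (Submodule.mem_span_singleton_self e)⟩
    rw [happ] at h
    simpa using h
  · have h := hgs (-x) ⟨0, C.zero_mem, 1, zero_le_one, by simp⟩
    rw [map_neg] at h
    linarith

/-- An element that is nonnegative at all pure states lies in the closure of the cone. -/
theorem add_smul_mem_of_forall_extremePoints (hunit : ∀ x : E, ∃ n : ℕ, n • e - x ∈ C)
    (he : e ∈ C) {x : E} (hx : ∀ φ ∈ (coneStates C e).extremePoints ℝ, 0 ≤ φ x)
    {ε : ℝ} (hε : 0 < ε) : x + ε • e ∈ C := by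
  by_contra hmem
  obtain ⟨φ, hφ, hφx⟩ := exists_coneState_nonpos hunit he hmem
  have hsub : coneStates C e ⊆ {ψ | 0 ≤ ψ x} := by
    rw [← closure_convexHull_extremePoints (isCompact_coneStates hunit) convex_coneStates]
    refine closure_minimal (convexHull_min hx ?_)
      (isClosed_le continuous_const (continuous_apply x))
    exact convex_halfSpace_ge (f := fun ψ : E → ℝ => ψ x) ⟨fun _ _ => rfl, fun _ _ => rfl⟩ 0
  have h0 : 0 ≤ φ x := hsub hφ
  obtain ⟨⟨L, rfl⟩, -, hLe⟩ := hφ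
  rw [map_add, map_smul, hLe, smul_eq_mul] at hφx
  linarith

variable {A : Type*} [CommRing A] [Algebra ℝ A] [Module A E] [IsScalarTower ℝ A E]

/-- If `N e - p² e` lies in a cone stable under multiplication by squares, then every positive
functional is nonnegative at `N m - p² m` for all `m` in the cone. -/
theorem map_sq_smul_le {L : E →ₗ[ℝ] ℝ} (hunit : ∀ x : E, ∃ n : ℕ, n • e - x ∈ C)
    (hsq : ∀ (p : A), ∀ m ∈ C, p ^ 2 • m ∈ C) (hL : ∀ m ∈ C, 0 ≤ L m)
    {p : A} {N : ℝ} (hN : 0 < N) (hp : N • e - p ^ 2 • e ∈ C) {m : E} (hm : m ∈ C) :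
    L (p ^ 2 • m) ≤ N * L m := by
  obtain ⟨n, hn⟩ := hunit m
  have he (k : ℕ) : L ((p ^ k) ^ 2 • e) ≤ L e * N ^ k := by
    induction k with
    | zero => simp
    | succ k ih =>
      have h := hL _ (hsq (p ^ k) _ hp)
      rw [smul_sub, smul_comm, smul_smul, map_sub, map_smul, smul_eq_mul,
        show (p ^ k) ^ 2 * p ^ 2 = (p ^ (k + 1)) ^ 2 by ring] at h
      calc _ ≤ N * L ((p ^ k) ^ 2 • e) := by linarith
        _ ≤ N * (L e * N ^ k) := mul_le_mul_of_nonneg_left ih hN.le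
        _ = _ := by ring
  have key := le_mul_of_logConvex_of_le_pow (a := fun k => L ((p ^ k) ^ 2 • m))
    (c := n * L e) hN (fun k => hL _ (hsq _ _ hm)) (fun k => ?_) (fun k => ?_)
  · simpa using key
  · have hquad (t : ℝ) : 0 ≤ L ((p ^ (k + 2)) ^ 2 • m) * (t * t)
        + 2 * L ((p ^ (k + 1)) ^ 2 • m) * t + L ((p ^ k) ^ 2 • m) := by
      have h := hL _ (hsq (p ^ k * (1 + t • p ^ 2)) _ hm)
      have hexp : (p ^ k * (1 + t • p ^ 2)) ^ 2 = (p ^ k) ^ 2 + (2 * t) • (p ^ (k + 1)) ^ 2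
          + (t * t) • (p ^ (k + 2)) ^ 2 := by
        simp only [Algebra.smul_def, map_mul, map_ofNat]
        ring
      rw [hexp, add_smul, add_smul, smul_assoc, smul_assoc, map_add, map_add,
        L.map_smul, L.map_smul, smul_eq_mul, smul_eq_mul] at h
      linarith
    have hd := discrim_le_zero hquad
    rw [discrim] at hd
    linarith
  · have h := hL _ (hsq (p ^ k) _ hn)
    rw [smul_sub, smul_comm, map_sub, map_nsmul, nsmul_eq_mul] at h
    have h' := mul_le_mul_of_nonneg_left (he k) (Nat.cast_nonneg n : (0 : ℝ) ≤ n)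
    linarith

/-- Pure states are multiplicative with respect to squares of scalars. -/
theorem map_sq_smul_of_mem_extremePoints {L : E →ₗ[ℝ] ℝ}
    (hunit : ∀ x : E, ∃ n : ℕ, n • e - x ∈ C) (he : e ∈ C)
    (hsq : ∀ (p : A), ∀ m ∈ C, p ^ 2 • m ∈ C)
    (hL : ⇑L ∈ (coneStates C e).extremePoints ℝ) (p : A) (x : E) :
    L (p ^ 2 • x) = L (p ^ 2 • e) * L x := by
  obtain ⟨⟨-, hpos, hone⟩, hext⟩ := hL
  let L₁ : E →ₗ[ℝ] ℝ := L ∘ₗ Algebra.lsmul ℝ ℝ E (p ^ 2)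
  have hL₁ (y : E) : L₁ y = L (p ^ 2 • y) := rfl
  have hL₁pos : ∀ m ∈ C, 0 ≤ L₁ m := fun m hm => hpos _ (hsq p m hm)
  obtain ⟨n, hn⟩ := hunit (p ^ 2 • e)
  have hN : (0 : ℝ) < n + 1 := by positivity
  have hp : ((n : ℝ) + 1) • e - p ^ 2 • e ∈ C := by
    have h := C.add_mem hn he
    convert h using 1
    rw [add_smul, one_smul, Nat.cast_smul_eq_nsmul]
    abel
  have hle : L₁ e ≤ n := by
    have h := hpos _ hn
    rw [map_sub, map_nsmul, hone, nsmul_eq_mul, mul_one] at h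
    rw [hL₁]
    linarith
  rcases (hL₁pos e he).eq_or_lt with h0 | h0
  · have hz (y : E) : 0 ≤ - L₁ y := by
      obtain ⟨k, hk⟩ := hunit y
      have h := hL₁pos _ hk
      rw [map_sub, map_nsmul, ← h0] at h
      simpa using h
    have h1 := hz x
    have h2 := hz (-x)
    rw [map_neg] at h2
    rw [← hL₁, ← hL₁, ← h0]
    linarith
  · set c := L₁ e with hc
    set N : ℝ := n + 1 with hNdef
    have hcN : 0 < N - c := by linarith
    let L₂ : E →ₗ[ℝ] ℝ := N • L - L₁
    have hL₂ (y : E) : L₂ y = N * L y - L₁ y := rfl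
    have h1 : ⇑(c⁻¹ • L₁) ∈ coneStates C e :=
      ⟨⟨_, rfl⟩, fun m hm => mul_nonneg (inv_nonneg.2 h0.le) (hL₁pos m hm),
        inv_mul_cancel₀ h0.ne'⟩
    have h2 : ⇑((N - c)⁻¹ • L₂) ∈ coneStates C e := by
      refine ⟨⟨_, rfl⟩, fun m hm => mul_nonneg (inv_nonneg.2 hcN.le) ?_, ?_⟩
      · rw [hL₂, sub_nonneg]
        exact map_sq_smul_le hunit hsq hpos hN hp hm
      · rw [LinearMap.smul_apply, hL₂, hone, mul_one, smul_eq_mul]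
        exact inv_mul_cancel₀ hcN.ne'
    have hseg : ⇑L ∈ openSegment ℝ ⇑(c⁻¹ • L₁) ⇑((N - c)⁻¹ • L₂) := by
      refine ⟨c / N, (N - c) / N, by positivity, by positivity, by field_simp; ring, ?_⟩
      ext y
      simp only [Pi.add_apply, Pi.smul_apply, LinearMap.smul_apply, smul_eq_mul, hL₂]
      field_simp
      ring
    have heq := congrFun (hext h1 h2 hseg) x
    rw [LinearMap.smul_apply, smul_eq_mul, inv_mul_eq_iff_eq_mul₀ h0.ne'] at heq
    exact heq

/-- Pure states are multiplicative with respect to scalars. -/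
theorem map_smul_of_mem_extremePoints {L : E →ₗ[ℝ] ℝ}
    (hunit : ∀ x : E, ∃ n : ℕ, n • e - x ∈ C) (he : e ∈ C)
    (hsq : ∀ (p : A), ∀ m ∈ C, p ^ 2 • m ∈ C)
    (hL : ⇑L ∈ (coneStates C e).extremePoints ℝ) (p : A) (x : E) :
    L (p • x) = L (p • e) * L x := by
  have hpol (y : E) : 4 * L (p • y) = L ((p + 1) ^ 2 • y) - L ((p - 1) ^ 2 • y) := by
    rw [← map_sub, ← sub_smul, show (p + 1) ^ 2 - (p - 1) ^ 2 = (4 : ℝ) • p by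
      rw [Algebra.smul_def, map_ofNat]; ring, smul_assoc, L.map_smul, smul_eq_mul]
  have h1 := map_sq_smul_of_mem_extremePoints hunit he hsq hL (p + 1) x
  have h2 := map_sq_smul_of_mem_extremePoints hunit he hsq hL (p - 1) x
  have h3 := hpol x
  have h4 := congrArg (· * L x) (hpol e)
  rw [h1, h2] at h3
  linarith

end ConeStates

/-- A pure state for a cone stable under squares of polynomials acts on polynomial scalars as
evaluation at a point. -/
theorem exists_map_smul_eq_eval {d : ℕ} {E : Type*} [AddCommGroup E] [Module ℝ E]
    [Module (MvPolynomial (Fin d) ℝ) E] [IsScalarTower ℝ (MvPolynomial (Fin d) ℝ) E]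
    {C : PointedCone ℝ E} {e : E} {L : E →ₗ[ℝ] ℝ}
    (hunit : ∀ x : E, ∃ n : ℕ, n • e - x ∈ C) (he : e ∈ C)
    (hsq : ∀ (p : MvPolynomial (Fin d) ℝ), ∀ m ∈ C, p ^ 2 • m ∈ C)
    (hL : ⇑L ∈ (coneStates C e).extremePoints ℝ) :
    ∃ a : Fin d → ℝ, ∀ (p : MvPolynomial (Fin d) ℝ) (x : E),
      L (p • x) = MvPolynomial.eval a p * L x := by
  have hmul := map_smul_of_mem_extremePoints hunit he hsq hL
  refine ⟨fun i => L ((X i : MvPolynomial (Fin d) ℝ) • e), fun p x => ?_⟩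
  induction p using MvPolynomial.induction_on generalizing x with
  | C r =>
    rw [eval_C, show (MvPolynomial.C r : MvPolynomial (Fin d) ℝ) = r • 1 by
      rw [← algebraMap_eq, Algebra.algebraMap_eq_smul_one], smul_assoc, one_smul, map_smul,
      smul_eq_mul]
  | add p q hp hq => rw [add_smul, map_add, hp, hq, map_add, add_mul]
  | mul_X p i hp =>
    rw [mul_smul, hp, hmul, map_mul, eval_X, mul_assoc]

/-- The cone of matrix polynomials whose symmetrization lies in a quadratic module. -/
def IsMatPolyQuadraticModule.cone {ν d : ℕ}
    {M : Set (Matrix (Fin ν) (Fin ν) (MvPolynomial (Fin d) ℝ))}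
    (hM : IsMatPolyQuadraticModule ν d M) :
    PointedCone ℝ (Matrix (Fin ν) (Fin ν) (MvPolynomial (Fin d) ℝ)) where
  carrier := {G | G + Gᵀ ∈ M}
  zero_mem' := by simpa using hM.2.2 1 hM.1 0
  add_mem' := by
    intro G H hG hH
    have h := hM.2.1 _ hG _ hH
    simp only [Set.mem_ofPred_eq, transpose_add]
    convert h using 1
    abel
  smul_mem' := by
    rintro ⟨c, hc⟩ G hG
    have h := hM.2.2 _ hG (Real.sqrt c • 1)
    change c • G + (c • G)ᵀ ∈ M
    simpa [smul_smul, Real.mul_self_sqrt hc] using h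

section MatrixPolynomial

variable {ν d : ℕ} {M : Set (Matrix (Fin ν) (Fin ν) (MvPolynomial (Fin d) ℝ))}

theorem IsMatPolyQuadraticModule.mem_cone (hM : IsMatPolyQuadraticModule ν d M)
    {G : Matrix (Fin ν) (Fin ν) (MvPolynomial (Fin d) ℝ)} : G ∈ hM.cone ↔ G + Gᵀ ∈ M :=
  Iff.rfl

theorem IsMatPolyQuadraticModule.smul_mem (hM : IsMatPolyQuadraticModule ν d M)
    {G : Matrix (Fin ν) (Fin ν) (MvPolynomial (Fin d) ℝ)} (hG : G ∈ M) {c : ℝ} (hc : 0 ≤ c) :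
    c • G ∈ M := by
  simpa [smul_smul, Real.mul_self_sqrt hc] using hM.2.2 _ hG (Real.sqrt c • 1)

theorem IsMatPolyQuadraticModule.mem_cone_iff_of_symm (hM : IsMatPolyQuadraticModule ν d M)
    {G : Matrix (Fin ν) (Fin ν) (MvPolynomial (Fin d) ℝ)} (hG : Gᵀ = G) :
    G ∈ hM.cone ↔ G ∈ M := by
  rw [hM.mem_cone, hG]
  refine ⟨fun h => ?_, fun h => hM.2.1 _ h _ h⟩
  have h' := hM.smul_mem h (c := 1 / 2) (by norm_num)
  rwa [← two_smul ℝ G, smul_smul, one_div, inv_mul_cancel₀ two_ne_zero, one_smul] at h'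

theorem IsMatPolyQuadraticModule.conj_mem_cone (hM : IsMatPolyQuadraticModule ν d M)
    {G : Matrix (Fin ν) (Fin ν) (MvPolynomial (Fin d) ℝ)} (hG : G ∈ hM.cone)
    (H : Matrix (Fin ν) (Fin ν) (MvPolynomial (Fin d) ℝ)) : Hᵀ * G * H ∈ hM.cone := by
  have h := hM.2.2 _ hG H
  rw [hM.mem_cone]
  convert h using 1
  simp only [transpose_mul, transpose_transpose, mul_add, add_mul, mul_assoc]

/-- A quadratic module contains the scalar matrices with entry `wᵀ G w` for `G` in the module. -/
theorem IsMatPolyQuadraticModule.dotProduct_smul_one_mem (hM : IsMatPolyQuadraticModule ν d M)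
    {G : Matrix (Fin ν) (Fin ν) (MvPolynomial (Fin d) ℝ)} (hG : G ∈ M)
    (w : Fin ν → MvPolynomial (Fin d) ℝ) :
    (w ⬝ᵥ G *ᵥ w) • (1 : Matrix (Fin ν) (Fin ν) (MvPolynomial (Fin d) ℝ)) ∈ M := by
  have hsum : (w ⬝ᵥ G *ᵥ w) • (1 : Matrix (Fin ν) (Fin ν) (MvPolynomial (Fin d) ℝ)) =
      ∑ i, (vecMulVec w (Pi.single i 1))ᵀ * G * vecMulVec w (Pi.single i 1) := by
    have hterm (i : Fin ν) : (vecMulVec w (Pi.single i 1))ᵀ * G * vecMulVec w (Pi.single i 1) =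
        (w ⬝ᵥ G *ᵥ w) • single i i (1 : MvPolynomial (Fin d) ℝ) := by
      rw [transpose_vecMulVec, mul_assoc, mul_vecMulVec, vecMulVec_mul_vecMulVec,
        single_eq_single_vecMulVec_single]
      ext j k
      simp [vecMulVec_apply, mul_left_comm]
    simp_rw [hterm, ← Finset.smul_sum]
    rw [← sum_single_one]
  rw [hsum]
  refine Finset.sum_induction _ (· ∈ M) (fun a b ha hb => hM.2.1 a ha b hb) ?_
    fun i _ => hM.2.2 G hG _
  simpa using hM.2.2 1 hM.1 0

theorem eval_dotProduct_mulVec (G : Matrix (Fin ν) (Fin ν) (MvPolynomial (Fin d) ℝ))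
    (a : Fin d → ℝ) (v : Fin ν → ℝ) :
    MvPolynomial.eval a ((fun i => C (v i)) ⬝ᵥ G *ᵥ fun i => C (v i)) =
      v ⬝ᵥ (G.map (MvPolynomial.eval a)) *ᵥ v := by
  simp [dotProduct, mulVec]

end MatrixPolynomial

/-- For an archimedean quadratic module `M` in `M_ν(ℝ[x₁,…,x_d])` and a
symmetric matrix polynomial `F`: `vᵀ F(a) v ≥ 0` for all `(a,v) ∈ K_M` iff
`F + ε I_ν ∈ M` for every `ε > 0`. -/
theorem statement1 (ν d : ℕ) (hν : 1 ≤ ν) (hd : 1 ≤ d)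
    (M : Set (Matrix (Fin ν) (Fin ν) (MvPolynomial (Fin d) ℝ)))
    (hQM : IsMatPolyQuadraticModule ν d M)
    (hArch : IsMatPolyArchimedean ν d M)
    (F : Matrix (Fin ν) (Fin ν) (MvPolynomial (Fin d) ℝ))
    (hF : Fᵀ = F) :
    (∀ (a : Fin d → ℝ) (v : Fin ν → ℝ),
        (∀ G ∈ M, 0 ≤ v ⬝ᵥ (G.map (MvPolynomial.eval a)).mulVec v) →
        0 ≤ v ⬝ᵥ (F.map (MvPolynomial.eval a)).mulVec v) ↔
    (∀ ε : ℝ, 0 < ε →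
        F + ε • (1 : Matrix (Fin ν) (Fin ν) (MvPolynomial (Fin d) ℝ)) ∈ M) := by
  have hcone {G} (hG : Gᵀ = G) : G ∈ hQM.cone ↔ G ∈ M := hQM.mem_cone_iff_of_symm hG
  have hunit : ∀ G : Matrix (Fin ν) (Fin ν) (MvPolynomial (Fin d) ℝ),
      ∃ n : ℕ, n • (1 : Matrix (Fin ν) (Fin ν) (MvPolynomial (Fin d) ℝ)) - G ∈ hQM.cone := by
    intro G
    obtain ⟨n, hn⟩ := hArch (G + Gᵀ) (by rw [transpose_add, transpose_transpose, add_comm])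
    refine ⟨n, hQM.mem_cone.2 ?_⟩
    have h := hQM.2.1 _ hn _ (hQM.smul_mem hQM.1 (Nat.cast_nonneg n : (0 : ℝ) ≤ n))
    convert h using 1
    rw [Nat.cast_smul_eq_nsmul, transpose_sub, transpose_smul, transpose_one]
    abel
  have hone : (1 : Matrix (Fin ν) (Fin ν) (MvPolynomial (Fin d) ℝ)) ∈ hQM.cone :=
    (hcone transpose_one).2 hQM.1
  have hsq : ∀ p : MvPolynomial (Fin d) ℝ, ∀ m ∈ hQM.cone, p ^ 2 • m ∈ hQM.cone := by
    intro p m hm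
    simpa [smul_smul, sq] using hQM.conj_mem_cone hm (p • 1)
  constructor
  · intro h ε hε
    rw [← hcone (by rw [transpose_add, transpose_smul, transpose_one, hF])]
    refine add_smul_mem_of_forall_extremePoints hunit hone (fun φ hφ => ?_) hε
    obtain ⟨L, rfl⟩ := hφ.1.1
    obtain ⟨a, ha⟩ := exists_map_smul_eq_eval hunit hone hsq hφ
    obtain ⟨-, hpos, hL1⟩ := hφ.1
    have hK : ∀ (v : Fin ν → ℝ), ∀ G ∈ M, 0 ≤ v ⬝ᵥ (G.map (MvPolynomial.eval a)).mulVec v := by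
      intro v G hG
      have hmem := hQM.dotProduct_smul_one_mem hG fun i => C (v i)
      have h0 := hpos _ ((hcone (by rw [transpose_smul, transpose_one])).2 hmem)
      rwa [ha, hL1, mul_one, eval_dotProduct_mulVec] at h0
    have hpsd : (F.map (MvPolynomial.eval a)).PosSemidef := by
      refine posSemidef_iff_dotProduct_mulVec.2 ⟨?_, fun v => ?_⟩
      · rw [IsHermitian, conjTranspose_eq_transpose_of_trivial, ← transpose_map, hF]
      · simpa using h a v (hK v)
    obtain ⟨B, hB⟩ : ∃ B : Matrix (Fin ν) (Fin ν) ℝ, F.map (MvPolynomial.eval a) = Bᵀ * B := by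
      open scoped MatrixOrder in
      obtain ⟨B, hB⟩ := CStarAlgebra.nonneg_iff_eq_star_mul_self.1 hpsd.nonneg
      exact ⟨B, by rw [hB, star_eq_conjTranspose, conjTranspose_eq_transpose_of_trivial]⟩
    have hexpand (G : Matrix (Fin ν) (Fin ν) (MvPolynomial (Fin d) ℝ)) :
        L G = ∑ i, ∑ j, MvPolynomial.eval a (G i j) * L (single i j 1) := by
      conv_lhs => rw [matrix_eq_sum_single G]
      simp only [map_sum]
      refine Finset.sum_congr rfl fun i _ => Finset.sum_congr rfl fun j _ => ?_
      rw [← ha, smul_single, smul_eq_mul, mul_one]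
    have hFB : L F = L ((B.map C)ᵀ * 1 * B.map C) := by
      rw [hexpand F, hexpand]
      refine Finset.sum_congr rfl fun i _ => Finset.sum_congr rfl fun j _ => ?_
      have hij : MvPolynomial.eval a (F i j) = (Bᵀ * B) i j := by rw [← hB, map_apply]
      rw [hij, mul_one]
      simp [mul_apply]
    rw [hFB]
    exact hpos _ (hQM.conj_mem_cone hone _)
  · intro h a v hv
    refine le_of_forall_pos_le_add fun δ hδ => ?_
    have hvv : 0 ≤ v ⬝ᵥ v := Finset.sum_nonneg fun i _ => mul_self_nonneg (v i)
    have hpos : 0 < v ⬝ᵥ v + 1 := by linarith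
    have h0 := hv _ (h (δ / (v ⬝ᵥ v + 1)) (by positivity))
    have hmap : (F + (δ / (v ⬝ᵥ v + 1)) • (1 : Matrix (Fin ν) (Fin ν)
        (MvPolynomial (Fin d) ℝ))).map (MvPolynomial.eval a) =
        F.map (MvPolynomial.eval a) + (δ / (v ⬝ᵥ v + 1)) • (1 : Matrix (Fin ν) (Fin ν) ℝ) := by
      ext i j
      simp [one_apply, apply_ite (MvPolynomial.eval a), smul_eval]
    rw [hmap, add_mulVec, dotProduct_add, smul_mulVec, one_mulVec, dotProduct_smul,
      smul_eq_mul] at h0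
    have h1 : δ / (v ⬝ᵥ v + 1) * (v ⬝ᵥ v) ≤ δ := by
      rw [div_mul_eq_mul_div, div_le_iff₀ hpos]
      nlinarith
    linarith
end

section
/- Let d ≥ 1 and let f be an element of the free unital associative ℝ-algebra ℝ⟨x₁,…,x_d⟩ on d generators with star f = f, where star is the involution fixing each generator and reversing products. Then the following are equivalent: (i) for every n ≥ 1 and every tuple X = (X₁,…,X_d) of symmetric matrices in M_n(ℝ), the matrix f(X) ∈ M_n(ℝ) is positive semidefinite; (ii) there exist finitely many g₁,…,g_m ∈ ℝ⟨x₁,…,x_d⟩ such that f = Σ_{i=1}^m (star gᵢ)·gᵢ. -/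
open Matrix

namespace FreeAlgebra

variable {α : Type*}

theorem basisFreeMonoid_apply (w : FreeMonoid α) :
    basisFreeMonoid ℝ α w = FreeMonoid.lift (ι ℝ) w := by
  simp [basisFreeMonoid, equivMonoidAlgebraFreeMonoid]

theorem basisFreeMonoid_one : basisFreeMonoid ℝ α 1 = 1 := by
  rw [basisFreeMonoid_apply, map_one]

theorem basisFreeMonoid_of (x : α) : basisFreeMonoid ℝ α (.of x) = ι ℝ x := by
  rw [basisFreeMonoid_apply, FreeMonoid.lift_eval_of]

theorem basisFreeMonoid_mul (u v : FreeMonoid α) :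
    basisFreeMonoid ℝ α (u * v) = basisFreeMonoid ℝ α u * basisFreeMonoid ℝ α v := by
  simp only [basisFreeMonoid_apply, map_mul]

theorem star_basisFreeMonoid (w : FreeMonoid α) :
    star (basisFreeMonoid ℝ α w) = basisFreeMonoid ℝ α (star w) := by
  induction w using FreeMonoid.inductionOn' with
  | one => simp [basisFreeMonoid_one]
  | of_mul x w ih =>
    rw [star_mul, basisFreeMonoid_mul, star_mul, ih, basisFreeMonoid_mul, FreeMonoid.star_of,
      basisFreeMonoid_of, star_ι]

theorem star_smul_real (r : ℝ) (a : FreeAlgebra ℝ α) : star (r • a) = r • star a := by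
  rw [Algebra.smul_def, star_mul, star_algebraMap, ← Algebra.commutes, ← Algebra.smul_def]

/-- The involution of the free algebra as a linear map. -/
noncomputable def starLinear (α : Type*) : FreeAlgebra ℝ α →ₗ[ℝ] FreeAlgebra ℝ α where
  toFun := star
  map_add' := star_add
  map_smul' := star_smul_real

@[simp]
theorem starLinear_apply (a : FreeAlgebra ℝ α) : starLinear α a = star a := rfl

variable (α) in
/-- The noncommutative polynomials of degree at most `n`. -/
noncomputable def degreeLE (n : ℕ) : Submodule ℝ (FreeAlgebra ℝ α) :=
  Submodule.span ℝ (basisFreeMonoid ℝ α '' {w | w.length ≤ n})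

theorem mem_degreeLE {n : ℕ} {a : FreeAlgebra ℝ α} :
    a ∈ degreeLE α n ↔ ∀ w, n < w.length → (basisFreeMonoid ℝ α).repr a w = 0 := by
  rw [degreeLE, Module.Basis.mem_span_image]
  simp only [Set.subset_def, Finset.mem_coe, Finsupp.mem_support_iff, Set.mem_ofPred_eq]
  exact forall_congr' fun w ↦ by rw [← not_lt, not_imp_not]

theorem basisFreeMonoid_mem_degreeLE {n : ℕ} {w : FreeMonoid α} (hw : w.length ≤ n) :
    basisFreeMonoid ℝ α w ∈ degreeLE α n :=
  Submodule.subset_span ⟨w, hw, rfl⟩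

theorem one_mem_degreeLE (n : ℕ) : (1 : FreeAlgebra ℝ α) ∈ degreeLE α n :=
  basisFreeMonoid_one (α := α) ▸ basisFreeMonoid_mem_degreeLE (Nat.zero_le n)

theorem degreeLE_mono {m n : ℕ} (h : m ≤ n) : degreeLE α m ≤ degreeLE α n :=
  Submodule.span_mono <| Set.image_mono fun _ hw ↦ le_trans hw h

theorem exists_mem_degreeLE (a : FreeAlgebra ℝ α) : ∃ n, a ∈ degreeLE α n := by
  refine ⟨((basisFreeMonoid ℝ α).repr a).support.sup FreeMonoid.length,
    mem_degreeLE.2 fun w hw ↦ ?_⟩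
  by_contra h
  exact hw.not_ge (Finset.le_sup (f := FreeMonoid.length) (Finsupp.mem_support_iff.2 h))

theorem length_star (w : FreeMonoid α) : (star w).length = w.length :=
  List.length_reverse (as := w.toList)

/-- Two bilinear maps agree on polynomials of degree at most `n` if they agree on words of length
at most `n`. -/
theorem ext_degreeLE {M : Type*} [AddCommGroup M] [Module ℝ M]
    {B C : FreeAlgebra ℝ α →ₗ[ℝ] FreeAlgebra ℝ α →ₗ[ℝ] M} {n : ℕ}
    (h : ∀ u v : FreeMonoid α, u.length ≤ n → v.length ≤ n →
      B (basisFreeMonoid ℝ α u) (basisFreeMonoid ℝ α v) =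
        C (basisFreeMonoid ℝ α u) (basisFreeMonoid ℝ α v))
    {a b : FreeAlgebra ℝ α} (ha : a ∈ degreeLE α n) (hb : b ∈ degreeLE α n) :
    B a b = C a b := by
  have key : ∀ u : FreeMonoid α, u.length ≤ n →
      B (basisFreeMonoid ℝ α u) b = C (basisFreeMonoid ℝ α u) b := fun u hu ↦
    LinearMap.eqOn_span (f := B (basisFreeMonoid ℝ α u)) (g := C (basisFreeMonoid ℝ α u))
      (by rintro _ ⟨v, hv, rfl⟩; exact h u v hu hv) hb
  exact LinearMap.eqOn_span (f := B.flip b) (g := C.flip b)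
    (by rintro _ ⟨u, hu, rfl⟩; exact key u hu) ha

/-- The bilinear map `(a, b) ↦ star a * b`. -/
noncomputable def starMul (α : Type*) :
    FreeAlgebra ℝ α →ₗ[ℝ] FreeAlgebra ℝ α →ₗ[ℝ] FreeAlgebra ℝ α :=
  LinearMap.mul ℝ _ ∘ₗ starLinear α

@[simp]
theorem starMul_apply (a b : FreeAlgebra ℝ α) : starMul α a b = star a * b := rfl

/-- The products `star a * b` of polynomials of degree at most `n` span the polynomials of degree
at most `2 * n`. -/
theorem degreeLE_two_mul (n : ℕ) :
    degreeLE α (2 * n) = Submodule.map₂ (starMul α) (degreeLE α n) (degreeLE α n) := by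
  apply le_antisymm
  · refine Submodule.span_le.2 ?_
    rintro _ ⟨w, hw, rfl⟩
    have h : star (star (FreeMonoid.ofList (w.toList.take n))) *
        FreeMonoid.ofList (w.toList.drop n) = w := by
      rw [star_star]; exact List.take_append_drop n w.toList
    rw [← h, basisFreeMonoid_mul, ← star_basisFreeMonoid, ← starMul_apply]
    have hw' : w.toList.length ≤ 2 * n := hw
    refine Submodule.apply_mem_map₂ _ (basisFreeMonoid_mem_degreeLE ?_)
      (basisFreeMonoid_mem_degreeLE ?_)
    · rw [length_star]
      simp [FreeMonoid.length]
    · simp only [FreeMonoid.length, FreeMonoid.toList_ofList, List.length_drop]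
      omega
  · rw [degreeLE, degreeLE, Submodule.map₂_span_span, Submodule.span_le]
    rintro _ ⟨_, ⟨u, hu, rfl⟩, _, ⟨v, hv, rfl⟩, rfl⟩
    beta_reduce
    rw [SetLike.mem_coe, starMul_apply, star_basisFreeMonoid, ← basisFreeMonoid_mul]
    refine basisFreeMonoid_mem_degreeLE ?_
    rw [FreeMonoid.length_mul, length_star, two_mul]
    exact add_le_add hu hv

theorem star_mul_mem_degreeLE {n : ℕ} {a b : FreeAlgebra ℝ α} (ha : a ∈ degreeLE α n)
    (hb : b ∈ degreeLE α n) : star a * b ∈ degreeLE α (2 * n) :=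
  degreeLE_two_mul (α := α) n ▸ Submodule.apply_mem_map₂ (starMul α) ha hb

theorem repr_star_mul {n : ℕ} {a b : FreeAlgebra ℝ α} (ha : a ∈ degreeLE α n)
    (hb : b ∈ degreeLE α n) {w : FreeMonoid α} (hw : w.length = n) :
    (basisFreeMonoid ℝ α).repr (star a * b) (star w * w) =
      (basisFreeMonoid ℝ α).repr a w * (basisFreeMonoid ℝ α).repr b w := by
  classical
  refine ext_degreeLE
    (B := (starMul α).compr₂ ((basisFreeMonoid ℝ α).coord (star w * w)))
    (C := (LinearMap.mul ℝ ℝ).compl₁₂ ((basisFreeMonoid ℝ α).coord w)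
      ((basisFreeMonoid ℝ α).coord w)) (fun u v hu hv ↦ ?_) ha hb
  simp only [LinearMap.compr₂_apply, starMul_apply, LinearMap.compl₁₂_apply,
    LinearMap.mul_apply', Module.Basis.coord_apply, star_basisFreeMonoid, ← basisFreeMonoid_mul,
    Module.Basis.repr_self, Finsupp.single_apply]
  have key : star u * v = star w * w ↔ u = w ∧ v = w := by
    refine ⟨fun h ↦ ?_, fun h ↦ by rw [h.1, h.2]⟩
    have hl : (star u * v).length = (star w * w).length := by rw [h]
    simp only [FreeMonoid.length_mul, length_star] at hl
    obtain ⟨h₁, h₂⟩ := List.append_inj (s₁ := (star u).toList) (s₂ := (star w).toList)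
      (t₁ := v.toList) (t₂ := w.toList) h
      (by change (star u).length = (star w).length; simp only [length_star]; omega)
    exact ⟨star_injective h₁, h₂⟩
  simp only [key]
  split_ifs <;> simp_all

/-- If a sum of hermitian squares vanishes, then so does each of them. -/
theorem eq_zero_of_sum_star_mul_self_eq_zero {κ : Type*} [Fintype κ]
    {g : κ → FreeAlgebra ℝ α}
        (h : ∑ i, star (g i) * g i = 0) (i : κ) : g i = 0 := by
  have lead (n : ℕ) (hg : ∀ i, g i ∈ degreeLE α n) (w : FreeMonoid α) (hw : w.length = n)
      (i : κ) : (basisFreeMonoid ℝ α).repr (g i) w = 0 := by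
    have hs : ∑ i, (basisFreeMonoid ℝ α).repr (g i) w * (basisFreeMonoid ℝ α).repr (g i) w = 0 := by
      simp_rw [← fun i ↦ repr_star_mul (hg i) (hg i) hw]
      rw [← Finsupp.finsetSum_apply, ← map_sum, h, map_zero, Finsupp.zero_apply]
    exact mul_self_eq_zero.1
      ((Finset.sum_eq_zero_iff_of_nonneg fun _ _ ↦ mul_self_nonneg _).1 hs i (Finset.mem_univ i))
  have main (n : ℕ) (hg : ∀ i, g i ∈ degreeLE α n) : g i = 0 := by
    induction n with
    | zero =>
      refine (basisFreeMonoid ℝ α).ext_elem fun w ↦ ?_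
      rw [map_zero, Finsupp.zero_apply]
      rcases w.length.eq_zero_or_pos with hw | hw
      · exact lead 0 hg w hw i
      · exact mem_degreeLE.1 (hg i) w hw
    | succ n ih =>
      refine ih fun j ↦ mem_degreeLE.2 fun w hw ↦ ?_
      rcases (Nat.succ_le_of_lt hw).eq_or_lt with hw | hw
      · exact lead _ hg w hw.symm j
      · exact mem_degreeLE.1 (hg j) w hw
  choose n hn using fun j ↦ exists_mem_degreeLE (g j)
  exact main (Finset.univ.sup n) fun j ↦ degreeLE_mono (Finset.le_sup (Finset.mem_univ j)) (hn j)

end FreeAlgebra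

/-- A positive definite symmetric bilinear form on a finite-dimensional real space has an
orthonormal basis, here characterised by the expansion it provides. -/
theorem LinearMap.exists_orthonormal_expansion {V : Type*} [AddCommGroup V] [Module ℝ V]
    [FiniteDimensional ℝ V] (B : V →ₗ[ℝ] V →ₗ[ℝ] ℝ) (symm : ∀ x y, B x y = B y x)
    (pos : ∀ x, x ≠ 0 → 0 < B x x) :
    ∃ (n : ℕ) (e : Fin n → V), ∀ x, ∑ j, B (e j) x • e j = x := by
  let core : InnerProductSpace.Core ℝ V :=
    { inner := fun x y ↦ B x y
      conj_inner_symm := fun x y ↦ symm y x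
      re_inner_nonneg := fun x ↦ by
        rcases eq_or_ne x 0 with rfl | hx
        · simp
        · exact (pos x hx).le
      add_left := fun x y z ↦ by simp
      smul_left := fun x y r ↦ by simp
      definite := fun x hx ↦ by_contra fun h ↦ (pos x h).ne' hx }
  let : NormedAddCommGroup V := core.toNormedAddCommGroup
  let : InnerProductSpace ℝ V := InnerProductSpace.ofCore core.toCore
  exact ⟨_, stdOrthonormalBasis ℝ V, (stdOrthonormalBasis ℝ V).sum_repr'⟩

namespace Matrix

variable {F : Type*} [Fintype F]

open scoped MatrixOrder in
theorem PosSemidef.exists_eq_conjTranspose_mul_self [DecidableEq F] {G : Matrix F F ℝ}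
    (hG : G.PosSemidef) : ∃ B : Matrix F F ℝ, G = Bᴴ * B :=
  CStarAlgebra.nonneg_iff_eq_star_mul_self.1 hG.nonneg

variable (F) in
/-- The pairs of a positive semidefinite matrix `G` and a nonnegative real `t` normalised by
`trace G + t = 1`. -/
def posSemidefSlice : Set (Matrix F F ℝ × ℝ) :=
  {x | x.1.PosSemidef ∧ 0 ≤ x.2 ∧ x.1.trace + x.2 = 1}

theorem convex_posSemidefSlice : Convex ℝ (posSemidefSlice F) := by
  rintro ⟨G, s⟩ ⟨hG, hs, h⟩ ⟨H, t⟩ ⟨hH, ht, h'⟩ c d hc hd hcd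
  refine ⟨(hG.smul hc).add (hH.smul hd), add_nonneg (mul_nonneg hc hs) (mul_nonneg hd ht), ?_⟩
  simp only [Prod.smul_mk, Prod.mk_add_mk, smul_eq_mul, Matrix.trace_add,
    Matrix.trace_smul] at *
  linear_combination c * h + d * h' + hcd

theorem isCompact_posSemidefSlice [DecidableEq F] : IsCompact (posSemidefSlice F) := by
  let Q : Set ((F → F → ℝ) × ℝ) :=
    Set.Icc (-1) 1 ∩ {x | 0 ≤ x.2 ∧ ∑ i, ∑ j, x.1 i j ^ 2 + x.2 = 1}
  have hQ : IsCompact Q := by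
    refine isCompact_Icc.inter_right (IsClosed.inter ?_ ?_)
    · exact isClosed_le continuous_const continuous_snd
    · exact isClosed_eq (by fun_prop) continuous_const
  let q : (F → F → ℝ) × ℝ → Matrix F F ℝ × ℝ := fun x ↦ ((of x.1)ᴴ * of x.1, x.2)
  have hq : Continuous q := by
    refine Continuous.prodMk ?_ continuous_snd
    exact (Continuous.matrix_conjTranspose continuous_fst).matrix_mul continuous_fst
  have htr (B : F → F → ℝ) : ((of B)ᴴ * of B).trace = ∑ i, ∑ j, B i j ^ 2 := by
    rw [Finset.sum_comm]
    simp [Matrix.trace, Matrix.mul_apply, sq]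
  convert hQ.image hq
  ext ⟨G, t⟩
  constructor
  · rintro ⟨hG, ht, h⟩
    obtain ⟨B, rfl⟩ := hG.exists_eq_conjTranspose_mul_self
    have h' : ∑ i, ∑ j, B i j ^ 2 + t = 1 := by rw [← htr B]; exact h
    have hB (i j : F) : B i j ^ 2 ≤ 1 := by
      have h₁ : B i j ^ 2 ≤ ∑ j, B i j ^ 2 :=
        Finset.single_le_sum (f := fun j ↦ B i j ^ 2) (fun _ _ ↦ sq_nonneg _)
          (Finset.mem_univ j)
      have h₂ : ∑ j, B i j ^ 2 ≤ ∑ i, ∑ j, B i j ^ 2 :=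
        Finset.single_le_sum (f := fun i ↦ ∑ j, B i j ^ 2)
          (fun _ _ ↦ Finset.sum_nonneg fun _ _ ↦ sq_nonneg _) (Finset.mem_univ i)
      simp only at ht
      linarith
    have hB' (i j : F) : |B i j| ≤ 1 := (sq_le_one_iff_abs_le_one _).1 (hB i j)
    have hS : 0 ≤ ∑ i, ∑ j, B i j ^ 2 :=
      Finset.sum_nonneg fun _ _ ↦ Finset.sum_nonneg fun _ _ ↦ sq_nonneg _
    simp only at ht
    refine ⟨(B, t), ⟨⟨⟨fun i j ↦ (abs_le.1 (hB' i j)).1, ?_⟩,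
      ⟨fun i j ↦ (abs_le.1 (hB' i j)).2, ?_⟩⟩, ht, h'⟩, rfl⟩
    · change -1 ≤ t
      linarith
    · change t ≤ 1
      linarith
  · rintro ⟨⟨B, s⟩, ⟨-, hs, h⟩, hBs⟩
    obtain ⟨rfl, rfl⟩ := Prod.mk.inj hBs
    exact ⟨posSemidef_conjTranspose_mul_self _, hs, by rw [htr]; exact h⟩

end Matrix

namespace FreeAlgebra

variable {α : Type*}

instance [Finite α] (n : ℕ) : Finite {w : FreeMonoid α | w.length ≤ n} :=
  (List.finite_length_le α n).to_subtype

instance [Finite α] (n : ℕ) : FiniteDimensional ℝ (degreeLE α n) :=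
  FiniteDimensional.span_of_finite ℝ ((List.finite_length_le α n).image _)

theorem lift_star {n : Type*} [Fintype n] [DecidableEq n] {X : α → Matrix n n ℝ}
    (hX : ∀ i, (X i)ᵀ = X i) (a : FreeAlgebra ℝ α) :
    lift ℝ X (star a) = (lift ℝ X a)ᵀ := by
  induction a using FreeAlgebra.induction with
  | grade0 r => simp [Matrix.algebraMap_eq_diagonal]
  | grade1 x => simp [hX]
  | mul a b ha hb => rw [star_mul, map_mul, map_mul, Matrix.transpose_mul, ha, hb]
  | add a b ha hb => rw [star_add, map_add, map_add, Matrix.transpose_add, ha, hb]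

theorem dotProduct_lift_star_mul {n : Type*} [Fintype n] [DecidableEq n] {X : α → Matrix n n ℝ}
    (hX : ∀ i, (X i)ᵀ = X i) (a b : FreeAlgebra ℝ α) (v : n → ℝ) :
    v ⬝ᵥ (lift ℝ X (star a * b)).mulVec v =
      (lift ℝ X a).mulVec v ⬝ᵥ (lift ℝ X b).mulVec v := by
  rw [map_mul, lift_star hX, ← Matrix.mulVec_mulVec, Matrix.dotProduct_mulVec,
    Matrix.vecMul_transpose]

/-- The truncated Gelfand–Naimark–Segal construction. -/
theorem exists_matrix_representation [Finite α] {k : ℕ} (l : FreeAlgebra ℝ α →ₗ[ℝ] ℝ)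
    (hstar : ∀ a, l (star a) = l a)
    (hpos : ∀ g ∈ degreeLE α k, g ≠ 0 → 0 < l (star g * g)) :
    ∃ n, 1 ≤ n ∧ ∃ X : α → Matrix (Fin n) (Fin n) ℝ, (∀ i, (X i)ᵀ = X i) ∧
      ∃ v : Fin n → ℝ, ∀ f ∈ degreeLE α (2 * k), v ⬝ᵥ (lift ℝ X f).mulVec v = l f := by
  obtain ⟨n, e, he⟩ := LinearMap.exists_orthonormal_expansion
    (((starMul α).compr₂ l).domRestrict₁₂ (degreeLE α k) (degreeLE α k))
    (fun x y ↦ by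
      simp only [LinearMap.domRestrict₁₂_apply, LinearMap.compr₂_apply, starMul_apply]
      rw [← hstar, star_mul, star_star])
    (fun x hx ↦ hpos x x.2 (by simpa using hx))
  replace he (p : FreeAlgebra ℝ α) (hp : p ∈ degreeLE α k) :
      ∑ j, l (star (e j : FreeAlgebra ℝ α) * p) • (e j : FreeAlgebra ℝ α) = p := by
    have := congrArg Subtype.val (he ⟨p, hp⟩)
    rwa [Submodule.coe_sum] at this
  let T (a : FreeAlgebra ℝ α) (j : Fin n) : ℝ := l (star (e j : FreeAlgebra ℝ α) * a)
  let X (i : α) : Matrix (Fin n) (Fin n) ℝ :=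
    of fun j m ↦ l (star (e j : FreeAlgebra ℝ α) * (ι ℝ i * e m))
  have hX (i : α) : (X i)ᵀ = X i := by
    ext j m
    simp only [X, Matrix.transpose_apply, of_apply]
    rw [← hstar]
    simp [mul_assoc]
  have hXT (i : α) (p : FreeAlgebra ℝ α) (hp : p ∈ degreeLE α k) :
      (X i).mulVec (T p) = T (ι ℝ i * p) := by
    ext j
    conv_rhs => rw [← he p hp]
    simp [X, T, Matrix.mulVec, dotProduct, Finset.mul_sum, mul_comm]
  have hdot (p q : FreeAlgebra ℝ α) (hp : p ∈ degreeLE α k) : T p ⬝ᵥ T q = l (star p * q) := by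
    conv_rhs => rw [← he p hp]
    simp [T, dotProduct, star_sum, Finset.sum_mul, star_smul_real]
  have hword (w : FreeMonoid α) (hw : w.length ≤ k) :
      (lift ℝ X (basisFreeMonoid ℝ α w)).mulVec (T 1) = T (basisFreeMonoid ℝ α w) := by
    induction w using FreeMonoid.inductionOn' with
    | one => simp [basisFreeMonoid_one]
    | of_mul x w ih =>
      rw [FreeMonoid.length_mul, FreeMonoid.length_of] at hw
      rw [basisFreeMonoid_mul, basisFreeMonoid_of, map_mul, ← Matrix.mulVec_mulVec,
        ih (by omega), lift_ι_apply, hXT x _ (basisFreeMonoid_mem_degreeLE (by omega))]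
  refine ⟨n, ?_, X, hX, T 1, fun f hf ↦ ?_⟩
  · rcases n.eq_zero_or_pos with rfl | h
    · simpa using he 1 (one_mem_degreeLE k)
    · exact h
  · rw [degreeLE_two_mul, degreeLE, Submodule.map₂_span_span] at hf
    induction hf using Submodule.span_induction with
    | mem x hx =>
      obtain ⟨_, ⟨u, hu, rfl⟩, _, ⟨v, hv, rfl⟩, rfl⟩ := hx
      beta_reduce
      rw [starMul_apply, dotProduct_lift_star_mul hX, hword u hu, hword v hv,
        hdot _ _ (basisFreeMonoid_mem_degreeLE hu)]
    | zero => simp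
    | add x y _ _ hx hy => rw [map_add, map_add, Matrix.add_mulVec, dotProduct_add, hx, hy]
    | smul r x _ hx => rw [map_smul, map_smul, Matrix.smul_mulVec, dotProduct_smul, hx]

/-- The polynomial with coefficients `c` in the words indexed by `s`. -/
noncomputable def ofCoeffs {s : Set (FreeMonoid α)} [Fintype s] (c : s → ℝ) : FreeAlgebra ℝ α :=
  ∑ u, c u • basisFreeMonoid ℝ α u

/-- The polynomial represented by a Gram matrix indexed by the set of words `s`. -/
noncomputable def ofGram (s : Set (FreeMonoid α)) [Fintype s] :
    Matrix s s ℝ →ₗ[ℝ] FreeAlgebra ℝ α where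
  toFun G := ∑ u, ∑ v, G u v • (star (basisFreeMonoid ℝ α u) * basisFreeMonoid ℝ α v)
  map_add' G H := by simp only [Matrix.add_apply, add_smul, Finset.sum_add_distrib]
  map_smul' r G := by
    simp only [Matrix.smul_apply, smul_eq_mul, mul_smul, Finset.smul_sum, RingHom.id_apply]

theorem ofGram_apply {s : Set (FreeMonoid α)} [Fintype s] (G : Matrix s s ℝ) :
    ofGram s G =
      ∑ u, ∑ v, G u v • (star (basisFreeMonoid ℝ α u.1) * basisFreeMonoid ℝ α v.1) := rfl

theorem ofGram_mem_degreeLE {k : ℕ} [Fintype {w : FreeMonoid α | w.length ≤ k}]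
    (G : Matrix {w : FreeMonoid α | w.length ≤ k} {w : FreeMonoid α | w.length ≤ k} ℝ) :
    ofGram _ G ∈ degreeLE α (2 * k) :=
  Submodule.sum_mem _ fun u _ ↦ Submodule.sum_mem _ fun v _ ↦ Submodule.smul_mem _ _ <|
    star_mul_mem_degreeLE (basisFreeMonoid_mem_degreeLE u.2) (basisFreeMonoid_mem_degreeLE v.2)

theorem ofGram_vecMulVec {s : Set (FreeMonoid α)} [Fintype s] (c : s → ℝ) :
    ofGram s (vecMulVec c c) = star (ofCoeffs c) * ofCoeffs c := by
  simp only [ofGram_apply, ofCoeffs, vecMulVec_apply, star_sum, star_smul_real,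
    Finset.sum_mul_sum, smul_mul_smul_comm]

theorem ofGram_conjTranspose_mul {s : Set (FreeMonoid α)} [Fintype s] (B : Matrix s s ℝ) :
    ofGram s (Bᴴ * B) = ∑ i, star (ofCoeffs (B i)) * ofCoeffs (B i) := by
  simp_rw [← ofGram_vecMulVec, ← map_sum]
  congr 1
  ext u v
  simp [Matrix.mul_apply, Matrix.sum_apply, vecMulVec_apply]

theorem ofCoeffs_eq_zero {s : Set (FreeMonoid α)} [Fintype s] {c : s → ℝ}
    (h : ofCoeffs c = 0) : c = 0 :=
  funext <| Fintype.linearIndependent_iff.1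
    ((basisFreeMonoid ℝ α).linearIndependent.comp (Subtype.val : s → _)
      Subtype.val_injective) c h

theorem ofCoeffs_repr {k : ℕ} [Fintype {w : FreeMonoid α | w.length ≤ k}]
    {g : FreeAlgebra ℝ α} (hg : g ∈ degreeLE α k) :
    ofCoeffs (fun w : {w : FreeMonoid α | w.length ≤ k} ↦ (basisFreeMonoid ℝ α).repr g w) = g := by
  classical
    refine (basisFreeMonoid ℝ α).ext_elem fun w ↦ ?_
    simp only [ofCoeffs, map_sum, map_smul, Module.Basis.repr_self, Finsupp.finsetSum_apply,
      Finsupp.smul_apply, Finsupp.single_apply, smul_eq_mul, mul_ite, mul_one, mul_zero]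
    rcases le_or_gt w.length k with hw | hw
    · rw [Finset.sum_eq_single_of_mem (⟨w, hw⟩ : {w : FreeMonoid α | w.length ≤ k})
        (Finset.mem_univ _)]
      · simp
      · exact fun v _ hv ↦ if_neg fun h ↦ hv (Subtype.ext h)
    · rw [Finset.sum_eq_zero fun v _ ↦ if_neg fun h ↦ hw.not_ge (by rw [← h]; exact v.2)]
      exact (mem_degreeLE.1 hg w hw).symm

/-- A polynomial that is not a sum of hermitian squares is separated from them by a strictly
positive functional. -/
theorem exists_separating_functional [Finite α] {k : ℕ} {f : FreeAlgebra ℝ α}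
    (hf : f ∈ degreeLE α (2 * k))
    (hsos : ¬ ∃ (m : ℕ) (g : Fin m → FreeAlgebra ℝ α), f = ∑ i, star (g i) * g i) :
    ∃ l : FreeAlgebra ℝ α →ₗ[ℝ] ℝ, l f < 0 ∧
      ∀ g ∈ degreeLE α k, g ≠ 0 → 0 < l (star g * g) := by
  classical
  let F : Type _ := {w : FreeMonoid α | w.length ≤ k}
  let E : Type _ := {w : FreeMonoid α | w.length ≤ 2 * k}
  have : Fintype F := Fintype.ofFinite _
  have : Fintype E := Fintype.ofFinite _
  let b := basisFreeMonoid ℝ α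
  let coeffs : FreeAlgebra ℝ α →ₗ[ℝ] E → ℝ := LinearMap.pi fun w ↦ b.coord w.1
  have coeffs_inj (a : FreeAlgebra ℝ α) (ha : a ∈ degreeLE α (2 * k)) (h : coeffs a = 0) :
      a = 0 := by
    refine b.ext_elem fun w ↦ ?_
    rw [map_zero, Finsupp.zero_apply]
    rcases le_or_gt w.length (2 * k) with hw | hw
    · exact congrFun h ⟨w, hw⟩
    · exact mem_degreeLE.1 ha w hw
  let sep : Matrix F F ℝ × ℝ →ₗ[ℝ] E → ℝ :=
    coeffs ∘ₗ ((ofGram _).coprod (-(LinearMap.toSpanSingleton ℝ _ f)))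
  have sep_apply (G : Matrix F F ℝ) (t : ℝ) : sep (G, t) = coeffs (ofGram _ G - t • f) := by
    simp [sep, sub_eq_add_neg]
  have zero_notMem : (0 : E → ℝ) ∉ sep '' posSemidefSlice F := by
    rintro ⟨⟨G, t⟩, ⟨hG, ht, htr⟩, h⟩
    simp only at hG ht htr
    obtain ⟨B, rfl⟩ := hG.exists_eq_conjTranspose_mul_self
    rw [sep_apply] at h
    have h0 := sub_eq_zero.1 <|
      coeffs_inj _ (Submodule.sub_mem _ (ofGram_mem_degreeLE _) (Submodule.smul_mem _ t hf)) h
    rw [ofGram_conjTranspose_mul] at h0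
    rcases ht.eq_or_lt with rfl | ht
    · rw [zero_smul] at h0
      have hB : B = 0 :=
        funext fun i ↦ ofCoeffs_eq_zero (eq_zero_of_sum_star_mul_self_eq_zero h0 i)
      simp [hB] at htr
    · let eF := Fintype.equivFin F
      refine hsos ⟨Fintype.card F, fun i ↦ (√t)⁻¹ • ofCoeffs (B (eF.symm i)), ?_⟩
      have hr : (√t)⁻¹ * (√t)⁻¹ = t⁻¹ := by rw [← mul_inv, Real.mul_self_sqrt ht.le]
      simp only [star_smul_real, smul_mul_assoc, mul_smul_comm, smul_smul, hr]
      rw [eF.symm.sum_comp fun i ↦ t⁻¹ • (star (ofCoeffs (B i)) * ofCoeffs (B i)), ← Finset.smul_sum, h0,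
        inv_smul_smul₀ ht.ne']
  obtain ⟨L, u, hu, hL⟩ := geometric_hahn_banach_point_closed (convex_posSemidefSlice.linear_image sep)
    (isCompact_posSemidefSlice.image (LinearMap.continuous_of_finiteDimensional sep)).isClosed zero_notMem
  rw [map_zero] at hu
  have hpos (G : Matrix F F ℝ) (t : ℝ) (h : (G, t) ∈ posSemidefSlice F) : 0 < L (coeffs (ofGram _ G - t • f)) :=
    sep_apply G t ▸ hu.trans (hL _ ⟨_, h, rfl⟩)
  refine ⟨L.toLinearMap ∘ₗ coeffs, ?_, fun g hg hg0 ↦ ?_⟩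
  · have := hpos 0 1 ⟨.zero, zero_le_one, by simp⟩
    simpa using this
  · let c : F → ℝ := fun w ↦ b.repr g w.1
    have hgc : ofCoeffs c = g := ofCoeffs_repr hg
    have hs : 0 < c ⬝ᵥ c := by
      refine lt_of_le_of_ne (Finset.sum_nonneg fun _ _ ↦ mul_self_nonneg _) fun h ↦ hg0 ?_
      rw [← hgc, dotProduct_self_eq_zero.1 h.symm]
      simp [ofCoeffs]
    have hps : (vecMulVec c c).PosSemidef := by simpa using posSemidef_vecMulVec_self_star c
    have := hpos ((c ⬝ᵥ c)⁻¹ • vecMulVec c c) 0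
      ⟨hps.smul (inv_nonneg.2 hs.le), le_rfl, by
        simp [Matrix.trace_vecMulVec, inv_mul_cancel₀ hs.ne']⟩
    rw [zero_smul, sub_zero, map_smul, map_smul, map_smul, ofGram_vecMulVec, hgc, smul_eq_mul]
      at this
    exact pos_of_mul_pos_right this (inv_nonneg.2 hs.le)

end FreeAlgebra

/-- **Helton's theorem.** A symmetric element `f` of the free algebra
`ℝ⟨x₁,…,x_d⟩` is positive semidefinite at every tuple of symmetric real matrices (of every
size `n ≥ 1`) iff it is a finite sum of hermitian squares `Σ (star gᵢ) gᵢ`. -/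
theorem statement2 (d : ℕ) (hd : 1 ≤ d) (f : FreeAlgebra ℝ (Fin d))
    (hf : star f = f) :
    (∀ (n : ℕ), 1 ≤ n → ∀ X : Fin d → Matrix (Fin n) (Fin n) ℝ,
        (∀ i, (X i)ᵀ = X i) →
        ∀ v : Fin n → ℝ, 0 ≤ v ⬝ᵥ ((FreeAlgebra.lift ℝ X f).mulVec v)) ↔
    (∃ (m : ℕ) (g : Fin m → FreeAlgebra ℝ (Fin d)),
        f = ∑ i, star (g i) * g i) := by
  constructor
  · intro h
    by_contra hsos
    obtain ⟨k, hk⟩ := FreeAlgebra.exists_mem_degreeLE f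
    replace hk := FreeAlgebra.degreeLE_mono (show k ≤ 2 * k by omega) hk
    obtain ⟨l, hlf, hpos⟩ := FreeAlgebra.exists_separating_functional hk hsos
    let l' : FreeAlgebra ℝ (Fin d) →ₗ[ℝ] ℝ := l + l ∘ₗ FreeAlgebra.starLinear (Fin d)
    obtain ⟨n, hn, X, hX, v, hv⟩ := FreeAlgebra.exists_matrix_representation (k := k) l'
      (fun a ↦ by simp [l', add_comm])
      (fun g hg hg0 ↦ by simpa [l'] using hpos g hg hg0)
    have := h n hn X hX v
    rw [hv f hk] at this
    simp only [l', LinearMap.add_apply, LinearMap.comp_apply, FreeAlgebra.starLinear_apply,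
      hf] at this
    linarith
  · rintro ⟨m, g, rfl⟩ n - X hX v
    rw [map_sum, Matrix.sum_mulVec, dotProduct_sum]
    refine Finset.sum_nonneg fun i _ ↦ ?_
    rw [FreeAlgebra.dotProduct_lift_star_mul hX]
    exact Finset.sum_nonneg fun j _ ↦ mul_self_nonneg _
end

section
/- Let ν, d ≥ 1 and let F ∈ M_ν(ℝ⟨x₁,…,x_d⟩) be a matrix over the free algebra with F* = F, where F* is the conjugate transpose formed using the involution star of ℝ⟨x₁,…,x_d⟩. Then the following are equivalent: (i) for every n ≥ 1 and every tuple X of symmetric matrices in M_n(ℝ), the νn × νn real matrix obtained by evaluating every entry of F at X is positive semidefinite; (ii) there exist finitely many matrices G₁,…,G_m ∈ M_ν(ℝ⟨x₁,…,x_d⟩) such that F = Σ_{i=1}^m Gᵢ* Gᵢ. -/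
open Matrix

namespace NCSumOfSquares

section Gram

variable {A I : Type*} [Ring A] [StarRing A] [Algebra ℝ A]

/-- The Gram matrix of the family `h` under the bilinear form induced by the functional `L`. -/
def gram (h : I → A) : (A →ₗ[ℝ] ℝ) →ₗ[ℝ] Matrix I I ℝ where
  toFun L := of fun p q => L (star (h p) * h q)
  map_add' _ _ := rfl
  map_smul' _ _ := rfl

lemma gram_apply (h : I → A) (L : A →ₗ[ℝ] ℝ) (p q : I) :
    gram h L p q = L (star (h p) * h q) := rfl

variable [Fintype I]

lemma dotProduct_mulVec_eq_sum (M : Matrix I I ℝ) (v : I → ℝ) :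
    v ⬝ᵥ M *ᵥ v = ∑ p, ∑ q, v p * M p q * v q := by
  simp [dotProduct, mulVec, Finset.mul_sum, mul_assoc]

lemma neg_sum_abs_mul_le (M : Matrix I I ℝ) (v : I → ℝ) :
    -((∑ p, ∑ q, |M p q|) * (v ⬝ᵥ v)) ≤ v ⬝ᵥ M *ᵥ v := by
  rw [dotProduct_mulVec_eq_sum, Finset.sum_mul, ← Finset.sum_neg_distrib]
  refine Finset.sum_le_sum fun p _ => ?_
  rw [Finset.sum_mul, ← Finset.sum_neg_distrib]
  refine Finset.sum_le_sum fun q _ => ?_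
  have hle (r : I) : v r * v r ≤ v ⬝ᵥ v :=
    Finset.single_le_sum (f := fun r => v r * v r) (fun i _ => mul_self_nonneg _)
      (Finset.mem_univ r)
  have habs : |v p * v q| ≤ v ⬝ᵥ v := by
    rw [abs_le]
    constructor <;> nlinarith [hle p, hle q, sq_nonneg (v p + v q), sq_nonneg (v p - v q)]
  calc -(|M p q| * (v ⬝ᵥ v)) ≤ -(|M p q| * |v p * v q|) :=
        neg_le_neg (mul_le_mul_of_nonneg_left habs (abs_nonneg _))
    _ = -|v p * M p q * v q| := by rw [← abs_mul]; ring_nf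
    _ ≤ _ := neg_abs_le _

open scoped MatrixOrder in
/-- A positive semidefinite real matrix is of the form `Bᵀ B`. -/
lemma exists_transpose_mul_self [DecidableEq I] {M : Matrix I I ℝ} (hM : M.PosSemidef) :
    ∃ B : Matrix I I ℝ, M = Bᵀ * B := by
  obtain ⟨B, hB⟩ := CStarAlgebra.nonneg_iff_eq_star_mul_self.mp hM.nonneg
  exact ⟨B, by simpa [star_eq_conjTranspose, conjTranspose_eq_transpose_of_trivial] using hB⟩

/-- The cone of real matrices whose quadratic form is nonnegative. -/
def formCone (I : Type*) [Fintype I] : PointedCone ℝ (Matrix I I ℝ) where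
  carrier := {M | ∀ v : I → ℝ, 0 ≤ v ⬝ᵥ M *ᵥ v}
  add_mem' {M N} hM hN v := by
    rw [add_mulVec, dotProduct_add]
    exact add_nonneg (hM v) (hN v)
  zero_mem' v := by simp
  smul_mem' c M hM v := by
    have : v ⬝ᵥ (c • M) *ᵥ v = (c : ℝ) * (v ⬝ᵥ M *ᵥ v) := by
      rw [← smul_eq_mul, ← dotProduct_smul, ← smul_mulVec]; rfl
    rw [this]
    exact mul_nonneg c.2 (hM v)

lemma mem_formCone {M : Matrix I I ℝ} :
    M ∈ formCone I ↔ ∀ v : I → ℝ, 0 ≤ v ⬝ᵥ M *ᵥ v := Iff.rfl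

/-- A linear functional that is nonnegative on matrices with nonnegative quadratic form is
given by pairing with a positive semidefinite matrix. -/
lemma exists_posSemidef_of_nonneg [DecidableEq I] (g : Matrix I I ℝ →ₗ[ℝ] ℝ)
    (hg : ∀ M ∈ formCone I, 0 ≤ g M) :
    ∃ P : Matrix I I ℝ, P.PosSemidef ∧ ∀ M, g M = ∑ p, ∑ q, M p q * P p q := by
  have hsum (M : Matrix I I ℝ) : g M = ∑ p, ∑ q, M p q * g (single p q 1) := by
    conv_lhs => rw [matrix_eq_sum_single M]
    simp only [map_sum]
    refine Finset.sum_congr rfl fun p _ => Finset.sum_congr rfl fun q _ => ?_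
    rw [← smul_eq_mul, ← map_smul, smul_single, smul_eq_mul, mul_one]
  refine ⟨of fun p q => g (single p q 1), .of_dotProduct_mulVec_nonneg ?_ ?_, hsum⟩
  · ext p q
    have hle (p q : I) : g (single p q 1) ≤ g (single q p 1) := by
      rw [← sub_nonneg, ← map_sub]
      refine hg _ fun v => le_of_eq ?_
      rw [sub_mulVec, dotProduct_sub]
      simp [single_mulVec, dotProduct, Function.update_apply, Finset.sum_ite_eq', mul_comm]
    simpa using le_antisymm (hle q p) (hle p q)
  · intro v
    have h := hg (vecMulVec v v) fun w => by
      rw [vecMulVec_mulVec, dotProduct_smul, dotProduct_comm w v]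
      simpa using mul_self_nonneg (v ⬝ᵥ w)
    rw [hsum] at h
    rw [star_trivial, dotProduct_mulVec_eq_sum]
    refine h.trans_eq (Finset.sum_congr rfl fun p _ => Finset.sum_congr rfl fun q _ => ?_)
    simp only [vecMulVec_apply, of_apply]
    ring

/-- Duality for sums of squares supported on a finite family `h`: if some functional has a
coercive Gram matrix, and `F` is nonnegative under every functional whose Gram matrix has
nonnegative quadratic form, then `F` is a sum of hermitian squares. -/
theorem exists_eq_sum_star_mul_self [StarModule ℝ A] [DecidableEq I] (h : I → A)
    (L₀ : A →ₗ[ℝ] ℝ) (hL₀ : ∀ v : I → ℝ, v ⬝ᵥ v ≤ v ⬝ᵥ gram h L₀ *ᵥ v) {F : A}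
    (hF : F ∈ Submodule.span ℝ (Set.range fun p : I × I => star (h p.1) * h p.2))
    (hpos : ∀ L, gram h L ∈ formCone I → 0 ≤ L F) :
    ∃ G : I → A, F = ∑ b, star (G b) * G b := by
  obtain ⟨c, rfl⟩ := (Submodule.mem_span_range_iff_exists_fun ℝ).mp hF
  let ℓ : Matrix I I ℝ →ₗ[ℝ] ℝ := ∑ p : I × I, c p • Matrix.entryLinearMap ℝ ℝ p.1 p.2
  have hℓ (L : A →ₗ[ℝ] ℝ) : ℓ (gram h L) = L (∑ p, c p • (star (h p.1) * h p.2)) := by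
    simp [ℓ, gram_apply]
  obtain ⟨g, hgf, hg⟩ := riesz_extension (formCone I)
    ⟨LinearMap.range (gram h), ℓ.domRestrict _⟩ (by
      rintro ⟨_, L, rfl⟩ hL
      exact (hpos L hL).trans_eq (hℓ L).symm) (by
      intro M
      refine ⟨⟨gram h ((∑ p, ∑ q, |M p q|) • L₀), _, rfl⟩, fun v => ?_⟩
      have h1 := neg_sum_abs_mul_le M v
      have h2 := mul_le_mul_of_nonneg_left (hL₀ v)
        (Finset.sum_nonneg fun p (_ : p ∈ Finset.univ) =>
          Finset.sum_nonneg fun q (_ : q ∈ Finset.univ) => abs_nonneg (M p q))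
      simp only [map_smul, add_mulVec, smul_mulVec, dotProduct_add, dotProduct_smul, smul_eq_mul]
      linarith)
  obtain ⟨P, hP, hgP⟩ := exists_posSemidef_of_nonneg g hg
  obtain ⟨B, rfl⟩ := exists_transpose_mul_self hP
  refine ⟨fun b => ∑ p, B b p • h p, ?_⟩
  rw [← sub_eq_zero, ← Module.forall_dual_apply_eq_zero_iff ℝ]
  intro L
  rw [map_sub, sub_eq_zero, ← hℓ L]
  have h1 : g (gram h L) = ℓ (gram h L) := hgf ⟨_, L, rfl⟩
  rw [← h1, hgP]
  simp only [star_sum, star_smul, star_trivial, Finset.sum_mul, Finset.mul_sum, map_sum,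
    smul_mul_smul_comm, map_smul, gram_apply, mul_apply, transpose_apply, smul_eq_mul]
  rw [Finset.sum_comm]
  conv_rhs => rw [Finset.sum_comm]
  refine Finset.sum_congr rfl fun q _ => ?_
  rw [Finset.sum_comm]
  exact Finset.sum_congr rfl fun b _ => Finset.sum_congr rfl fun p _ => mul_comm _ _

end Gram

section Coercive

variable {I : Type*} [Fintype I]

/-- Weighted diagonal dominance implies coercivity. -/
lemma dotProduct_self_le_of_dominant {D : Matrix I I ℝ} {s : ℝ} (a : I → ℝ)
    (hs : 2 * (Fintype.card I : ℝ) ≤ s) (hs₀ : 0 < s) (ha : ∀ p, 1 ≤ a p)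
    (hdiag : ∀ p, D p p = a p ^ 2)
    (hoff : ∀ p q, p ≠ q → |D p q| * s ≤ a p * a q) (v : I → ℝ) :
    v ⬝ᵥ v ≤ 2 * (v ⬝ᵥ D *ᵥ v) := by
  classical
  let y : I → ℝ := fun p => a p * v p
  let S : ℝ := ∑ p, y p ^ 2
  have hS : v ⬝ᵥ v ≤ S := Finset.sum_le_sum fun p _ => by
    have : 1 ≤ a p ^ 2 := one_le_pow₀ (ha p)
    simp only [y]
    nlinarith [sq_nonneg (v p)]
  have hterm (p q : I) :
      (if p = q then y p ^ 2 else 0) - (y p ^ 2 + y q ^ 2) / (2 * s) ≤ v p * D p q * v q := by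
    have hnn : 0 ≤ (y p ^ 2 + y q ^ 2) / (2 * s) := by positivity
    split_ifs with hpq
    · subst hpq
      rw [hdiag]
      simp only [y] at hnn ⊢
      nlinarith
    · have h1 : |v p * D p q * v q| ≤ (y p ^ 2 + y q ^ 2) / (2 * s) := by
        rw [le_div_iff₀ (by positivity)]
        have h2 := mul_le_mul_of_nonneg_right (hoff p q hpq)
          (mul_nonneg (abs_nonneg (v p)) (abs_nonneg (v q)))
        have h3 : a p * |v p| * (a q * |v q|) * 2 ≤ y p ^ 2 + y q ^ 2 := by
          have h4 (r : I) : y r ^ 2 = (a r * |v r|) ^ 2 := by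
            simp only [y, mul_pow, sq_abs]
          rw [h4, h4]
          nlinarith [sq_nonneg (a p * |v p| - a q * |v q|)]
        rw [abs_mul, abs_mul]
        nlinarith
      linarith [neg_abs_le (v p * D p q * v q)]
  have hsum : S - Fintype.card I * S / s ≤ v ⬝ᵥ D *ᵥ v := by
    rw [dotProduct_mulVec_eq_sum]
    refine le_trans (le_of_eq ?_)
      (Finset.sum_le_sum fun p _ => Finset.sum_le_sum fun q _ => hterm p q)
    simp only [Finset.sum_sub_distrib, ← Finset.sum_div, Finset.sum_add_distrib,
      Finset.sum_ite_eq, Finset.mem_univ, if_true, Finset.sum_const, Finset.card_univ,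
      nsmul_eq_mul, ← Finset.mul_sum]
    simp only [S]
    field_simp
    ring
  have hS0 : 0 ≤ S := Finset.sum_nonneg fun p _ => sq_nonneg _
  have : Fintype.card I * S / s ≤ S / 2 := by
    rw [div_le_div_iff₀ hs₀ two_pos]
    nlinarith
  linarith

end Coercive

section Words

variable {X : Type*}

/-- The monomial in the free algebra spelled by a list of generators. -/
noncomputable def word (w : List X) : FreeAlgebra ℝ X := (w.map (FreeAlgebra.ι ℝ)).prod

lemma word_nil : word ([] : List X) = 1 := rfl

lemma word_cons (x : X) (w : List X) : word (x :: w) = FreeAlgebra.ι ℝ x * word w := by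
  simp [word]

lemma star_word_mul_word (u w : List X) : star (word u) * word w = word (u.reverse ++ w) := by
  induction u generalizing w with
  | nil => simp [word_nil]
  | cons x u ih =>
    rw [word_cons, star_mul, FreeAlgebra.star_ι, mul_assoc, ← word_cons, ih]
    simp

lemma basisFreeMonoid_apply (w : List X) :
    FreeAlgebra.basisFreeMonoid ℝ X (FreeMonoid.ofList w) = word w := by
  simp [FreeAlgebra.basisFreeMonoid, word, FreeAlgebra.equivMonoidAlgebraFreeMonoid,
    FreeMonoid.lift_apply]

instance : StarModule ℝ (FreeAlgebra ℝ X) where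
  star_smul r f := by
    rw [Algebra.smul_def, star_mul, FreeAlgebra.star_algebraMap, star_trivial r, Algebra.smul_def,
      Algebra.commutes]

/-- Lists of length at most `K`. -/
abbrev BoundedWord (X : Type*) (K : ℕ) := {w : List X // w.length ≤ K}

noncomputable instance [Finite X] (K : ℕ) : Fintype (BoundedWord X K) :=
  (List.finite_length_le X K).fintype

/-- The functional on the free algebra sending a palindrome `u` to `s ^ |u|²` and every other
word to `0`. -/
noncomputable def palindromeFunctional (X : Type*) (s : ℝ) : FreeAlgebra ℝ X →ₗ[ℝ] ℝ := by
  classical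
  exact (FreeAlgebra.basisFreeMonoid ℝ X).constr ℝ fun u =>
    if u.toList.reverse = u.toList then s ^ (u.toList.length ^ 2) else 0

open scoped Classical in
lemma palindromeFunctional_word (s : ℝ) (u : List X) :
    palindromeFunctional X s (word u) = if u.reverse = u then s ^ (u.length ^ 2) else 0 := by
  rw [← basisFreeMonoid_apply, palindromeFunctional, Module.Basis.constr_basis]
  simp only [FreeMonoid.toList_ofList]
  congr

lemma palindromeFunctional_star_word_mul_self (s : ℝ) (w : List X) :
    palindromeFunctional X s (star (word w) * word w) = (s ^ (2 * w.length ^ 2)) ^ 2 := by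
  rw [star_word_mul_word, palindromeFunctional_word, if_pos (by simp), ← pow_mul]
  congr 1
  simp
  ring

lemma abs_palindromeFunctional_mul_le {s : ℝ} (hs : 1 ≤ s) {u w : List X} (huw : u ≠ w) :
    |palindromeFunctional X s (star (word u) * word w)| * s ≤
      s ^ (2 * u.length ^ 2) * s ^ (2 * w.length ^ 2) := by
  rw [star_word_mul_word, palindromeFunctional_word]
  split_ifs with hpal
  · have hlen : u.length ≠ w.length := fun hlen => huw <| by
      rw [List.reverse_append, List.reverse_reverse] at hpal
      exact List.reverse_injective (List.append_inj_left hpal (by simp [hlen])).symm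
    rw [abs_of_nonneg (by positivity), ← pow_succ, ← pow_add]
    refine pow_le_pow_right₀ hs ?_
    rw [List.length_append, List.length_reverse]
    zify
    rcases Nat.lt_or_gt_of_ne hlen with h | h <;> zify at h <;> nlinarith
  · simp only [abs_zero, zero_mul]
    positivity

end Words

section MatrixWords

variable {X : Type*} {N : Type*} [DecidableEq N]

/-- The matrix with a single nonzero entry, a word, placed in the distinguished row `r`. -/
noncomputable def rowWord (r : N) (K : ℕ) (p : N × BoundedWord X K) :
    Matrix N N (FreeAlgebra ℝ X) :=
  single r p.1 (word p.2.1)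

variable [Fintype N]

lemma star_rowWord_mul_rowWord (r : N) {K : ℕ} (p q : N × BoundedWord X K) :
    star (rowWord r K p) * rowWord r K q = single p.1 q.1 (star (word p.2.1) * word q.2.1) := by
  simp [rowWord, star_eq_conjTranspose, conjTranspose_single]

lemma exists_coercive_functional [Finite X] (r : N) (K : ℕ) :
    ∃ L : Matrix N N (FreeAlgebra ℝ X) →ₗ[ℝ] ℝ,
      ∀ v : N × BoundedWord X K → ℝ, v ⬝ᵥ v ≤ v ⬝ᵥ gram (rowWord r K) L *ᵥ v := by
  let s : ℝ := 2 * Fintype.card (N × BoundedWord X K) + 1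
  have hs : 1 ≤ s := by simp only [s, le_add_iff_nonneg_left]; positivity
  let L := palindromeFunctional X s ∘ₗ traceLinearMap N ℝ (FreeAlgebra ℝ X)
  have hL (p q : N × BoundedWord X K) : gram (rowWord r K) L p q =
      if p.1 = q.1 then palindromeFunctional X s (star (word p.2.1) * word q.2.1) else 0 := by
    rw [gram_apply, star_rowWord_mul_rowWord, LinearMap.comp_apply, traceLinearMap_apply]
    split_ifs with h
    · rw [h, trace_single_eq_same]
    · rw [trace_single_eq_of_ne _ _ _ h, map_zero]
  refine ⟨(2 : ℝ) • L, fun v => ?_⟩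
  rw [map_smul, smul_mulVec, dotProduct_smul, smul_eq_mul]
  refine dotProduct_self_le_of_dominant (s := s) (fun p => s ^ (2 * p.2.1.length ^ 2))
    (by simp [s]) (by positivity) (fun p => one_le_pow₀ hs) (fun p => ?_) (fun p q hpq => ?_) v
  · rw [hL, if_pos rfl, palindromeFunctional_star_word_mul_self]
  · rw [hL]
    split_ifs with h
    · exact abs_palindromeFunctional_mul_le hs fun h' => hpq (Prod.ext h (Subtype.ext h'))
    · simp only [abs_zero, zero_mul]
      positivity

lemma exists_mem_span_single_word (F : Matrix N N (FreeAlgebra ℝ X)) :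
    ∃ K, F ∈ Submodule.span ℝ (Set.range fun t : N × N × BoundedWord X K =>
      single t.1 t.2.1 (word t.2.2.1)) := by
  let b := FreeAlgebra.basisFreeMonoid ℝ X
  obtain ⟨K, hK⟩ : ∃ K, ∀ i j, ∀ u ∈ (b.repr (F i j)).support, u.toList.length ≤ K := by
    classical
    let T := Finset.univ.biUnion fun t : N × N => (b.repr (F t.1 t.2)).support
    exact ⟨T.sup fun u => u.toList.length, fun i j u hu =>
      Finset.le_sup (f := fun u : FreeMonoid X => u.toList.length)
        (Finset.mem_biUnion.mpr ⟨(i, j), Finset.mem_univ _, hu⟩)⟩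
  refine ⟨K, ?_⟩
  rw [matrix_eq_sum_single F]
  refine Submodule.sum_mem _ fun i _ => Submodule.sum_mem _ fun j _ => ?_
  rw [← b.linearCombination_repr (F i j), Finsupp.linearCombination_apply, Finsupp.sum,
    ← singleLinearMap_apply (R := ℝ), map_sum]
  refine Submodule.sum_mem _ fun u hu => ?_
  rw [map_smul]
  refine Submodule.smul_mem _ _ (Submodule.subset_span ⟨⟨i, j, u.toList, hK i j u hu⟩, ?_⟩)
  rw [singleLinearMap_apply]
  exact congrArg _ (basisFreeMonoid_apply _).symm

end MatrixWords

section Evaluation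

variable {X : Type*} {N n : Type*} [Fintype n] [DecidableEq n]

/-- Entrywise evaluation of a matrix over the free algebra at a tuple of matrices, as a block
matrix. -/
noncomputable def blockEval (Y : X → Matrix n n ℝ) (F : Matrix N N (FreeAlgebra ℝ X)) :
    Matrix (N × n) (N × n) ℝ :=
  of fun p q => FreeAlgebra.lift ℝ Y (F p.1 q.1) p.2 q.2

lemma lift_star {Y : X → Matrix n n ℝ} (hY : ∀ x, (Y x)ᵀ = Y x) (f : FreeAlgebra ℝ X) :
    FreeAlgebra.lift ℝ Y (star f) = (FreeAlgebra.lift ℝ Y f)ᵀ := by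
  induction f using FreeAlgebra.induction with
  | grade0 r =>
    rw [FreeAlgebra.star_algebraMap, AlgHom.commutes, algebraMap_eq_diagonal, diagonal_transpose]
  | grade1 x => rw [FreeAlgebra.star_ι, FreeAlgebra.lift_ι_apply, hY]
  | mul a b ha hb => rw [star_mul, map_mul, ha, hb, map_mul, transpose_mul]
  | add a b ha hb => rw [star_add, map_add, ha, hb, map_add, transpose_add]

lemma blockEval_star {Y : X → Matrix n n ℝ} (hY : ∀ x, (Y x)ᵀ = Y x)
    (F : Matrix N N (FreeAlgebra ℝ X)) : blockEval Y (star F) = (blockEval Y F)ᵀ := by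
  ext p q
  simp [blockEval, star_apply, lift_star hY]

lemma blockEval_sum {ι : Type*} (Y : X → Matrix n n ℝ) (s : Finset ι)
    (F : ι → Matrix N N (FreeAlgebra ℝ X)) :
    blockEval Y (∑ i ∈ s, F i) = ∑ i ∈ s, blockEval Y (F i) := by
  ext p q
  simp [blockEval, Matrix.sum_apply]

variable [Fintype N]

lemma blockEval_mul (Y : X → Matrix n n ℝ) (F G : Matrix N N (FreeAlgebra ℝ X)) :
    blockEval Y (F * G) = blockEval Y F * blockEval Y G := by
  ext p q
  simp [blockEval, mul_apply, Matrix.sum_apply, Fintype.sum_prod_type]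

lemma blockEval_sum_star_mul_self_nonneg {ι : Type*} [Fintype ι] {Y : X → Matrix n n ℝ}
    (hY : ∀ x, (Y x)ᵀ = Y x) (G : ι → Matrix N N (FreeAlgebra ℝ X)) (v : N × n → ℝ) :
    0 ≤ v ⬝ᵥ blockEval Y (∑ i, star (G i) * G i) *ᵥ v := by
  rw [blockEval_sum, sum_mulVec, dotProduct_sum]
  refine Finset.sum_nonneg fun i _ => ?_
  rw [blockEval_mul, blockEval_star hY, ← mulVec_mulVec, dotProduct_mulVec, vecMul_transpose]
  exact Finset.sum_nonneg fun p _ => mul_self_nonneg _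

/-- The quadratic form of the evaluation of a matrix, as a linear functional. -/
noncomputable def evalForm (Y : X → Matrix n n ℝ) (v : N × n → ℝ) :
    Matrix N N (FreeAlgebra ℝ X) →ₗ[ℝ] ℝ where
  toFun F := v ⬝ᵥ blockEval Y F *ᵥ v
  map_add' F G := by
    have : blockEval Y (F + G) = blockEval Y F + blockEval Y G := by ext; simp [blockEval]
    rw [this, add_mulVec, dotProduct_add]
  map_smul' r F := by
    have : blockEval Y (r • F) = r • blockEval Y F := by ext; simp [blockEval]
    rw [this, smul_mulVec, dotProduct_smul, RingHom.id_apply]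

lemma evalForm_apply (Y : X → Matrix n n ℝ) (v : N × n → ℝ)
    (F : Matrix N N (FreeAlgebra ℝ X)) : evalForm Y v F = v ⬝ᵥ blockEval Y F *ᵥ v := rfl

lemma evalForm_single [DecidableEq N] (Y : X → Matrix n n ℝ) (v : N × n → ℝ) (i j : N)
    (f : FreeAlgebra ℝ X) : evalForm Y v (single i j f) =
      (fun a => v (i, a)) ⬝ᵥ FreeAlgebra.lift ℝ Y f *ᵥ fun b => v (j, b) := by
  have hentry (k l : N) (a b : n) : FreeAlgebra.lift ℝ Y (single i j f k l) a b =
      if i = k then if j = l then FreeAlgebra.lift ℝ Y f a b else 0 else 0 := by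
    rw [single_apply]
    by_cases hk : i = k <;> by_cases hl : j = l <;> simp [hk, hl]
  simp only [evalForm_apply, blockEval, dotProduct, mulVec, Fintype.sum_prod_type, of_apply, hentry]
  rw [Finset.sum_eq_single i]
  · refine Finset.sum_congr rfl fun a _ => ?_
    rw [Finset.sum_eq_single j]
    · simp
    · intro l _ hl
      simp [hl.symm]
    · simp
  · intro k _ hk
    simp [hk.symm]
  · simp

lemma evalForm_reindex {m : Type*} [Fintype m] [DecidableEq m] (e : n ≃ m)
    (Y : X → Matrix n n ℝ) (v : N × n → ℝ) (F : Matrix N N (FreeAlgebra ℝ X)) :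
    evalForm (fun x => reindex e e (Y x)) (fun p => v (p.1, e.symm p.2)) F = evalForm Y v F := by
  have hlift (f : FreeAlgebra ℝ X) : FreeAlgebra.lift ℝ (fun x => reindex e e (Y x)) f =
      reindex e e (FreeAlgebra.lift ℝ Y f) := by
    have : FreeAlgebra.lift ℝ (fun x => reindex e e (Y x)) =
        (reindexAlgEquiv ℝ ℝ e).toAlgHom.comp (FreeAlgebra.lift ℝ Y) := by
      ext : 1
      funext x
      simp
    rw [this]
    simp
  simp only [evalForm_apply, dotProduct, mulVec, blockEval, of_apply, hlift]
  rw [← ((Equiv.refl N).prodCongr e).sum_comp]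
  refine Finset.sum_congr rfl fun p _ => ?_
  rw [← ((Equiv.refl N).prodCongr e).sum_comp]
  simp

end Evaluation

section GNS

variable {X : Type*} [Finite X] {N : Type*} [Fintype N] [DecidableEq N]

/-- The empty word, viewed as a word of bounded length. -/
def emptyWord (X : Type*) (K : ℕ) : BoundedWord X K := ⟨[], Nat.zero_le K⟩

/-- A symmetric functional with positive definite Gram matrix agrees, on words of bounded length,
with the quadratic form of the evaluation at a tuple of symmetric matrices. -/
theorem exists_evalForm_eq [DecidableEq X] (r : N) (K : ℕ)
    {L : Matrix N N (FreeAlgebra ℝ X) →ₗ[ℝ] ℝ}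
    (hL : ∀ F, L (star F) = L F) (hpd : (gram (rowWord r K) L).PosDef) :
    ∃ (Y : X → Matrix (N × BoundedWord X K) (N × BoundedWord X K) ℝ)
      (v : N × N × BoundedWord X K → ℝ), (∀ x, (Y x)ᵀ = Y x) ∧
      ∀ F ∈ Submodule.span ℝ (Set.range fun t : N × N × BoundedWord X K =>
        single t.1 t.2.1 (word t.2.2.1)), evalForm Y v F = L F := by
  obtain ⟨C, hC⟩ := exists_transpose_mul_self hpd.posSemidef
  have hCdet : IsUnit C.det := by
    have h := (isUnit_iff_isUnit_det _).mp hpd.isUnit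
    rw [hC, det_mul] at h
    exact isUnit_of_mul_isUnit_right h
  let T (x : X) : Matrix (N × BoundedWord X K) (N × BoundedWord X K) ℝ := of fun p q =>
    L (single p.1 q.1 (star (word p.2.1) * (FreeAlgebra.ι ℝ x * word q.2.1)))
  have hT (x : X) : (T x)ᵀ = T x := by
    ext p q
    simp only [T, transpose_apply, of_apply]
    rw [← hL, star_eq_conjTranspose, conjTranspose_single]
    simp [mul_assoc]
  let Y (x : X) := (C⁻¹)ᵀ * T x * C⁻¹
  let ξ (j : N) (u : BoundedWord X K) : N × BoundedWord X K → ℝ := C *ᵥ Pi.single (j, u) 1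
  have hstep (x : X) (j : N) (u : List X) (hu : (x :: u).length ≤ K) (hu' : u.length ≤ K) :
      Y x *ᵥ ξ j ⟨u, hu'⟩ = ξ j ⟨x :: u, hu⟩ := by
    have hcol : T x *ᵥ Pi.single (j, ⟨u, hu'⟩) 1 =
        (Cᵀ * C) *ᵥ Pi.single (j, ⟨x :: u, hu⟩) 1 := by
      ext p
      rw [← hC]
      simp [T, gram_apply, star_rowWord_mul_rowWord, word_cons]
    simp only [Y, ξ]
    rw [mulVec_mulVec, Matrix.mul_assoc, nonsing_inv_mul _ hCdet, Matrix.mul_one,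
      ← mulVec_mulVec, hcol, mulVec_mulVec, ← Matrix.mul_assoc, ← transpose_mul,
      mul_nonsing_inv _ hCdet, transpose_one, Matrix.one_mul]
  have hword (j : N) (u : List X) (hu : u.length ≤ K) :
      FreeAlgebra.lift ℝ Y (word u) *ᵥ ξ j (emptyWord X K) = ξ j ⟨u, hu⟩ := by
    induction u with
    | nil => simp [word_nil, emptyWord]
    | cons x u ih =>
      have hu' : u.length ≤ K := (Nat.le_succ _).trans hu
      rw [word_cons, map_mul, FreeAlgebra.lift_ι_apply, ← mulVec_mulVec, ih hu', hstep]
  refine ⟨Y, fun p => ξ p.1 (emptyWord X K) p.2, fun x => ?_, ?_⟩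
  · simp only [Y, transpose_mul, transpose_transpose, hT, Matrix.mul_assoc]
  · refine LinearMap.eqOn_span ?_
    rintro _ ⟨⟨i, j, u, hu⟩, rfl⟩
    simp only
    rw [evalForm_single]
    change ξ i (emptyWord X K) ⬝ᵥ _ *ᵥ ξ j (emptyWord X K) = _
    rw [hword j u hu]
    simp only [ξ]
    rw [dotProduct_mulVec, ← mulVec_transpose, mulVec_mulVec, ← hC, dotProduct_comm]
    simp [gram_apply, star_rowWord_mul_rowWord, emptyWord, word_nil]
    rw [← hL, star_eq_conjTranspose, conjTranspose_single, star_star]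

end GNS

section Main

variable {X : Type*} [Finite X] {N : Type*} [Fintype N] [DecidableEq N]

/-- The involution as a real-linear map. -/
def starLinearMap (A : Type*) [Ring A] [StarRing A] [Algebra ℝ A] [StarModule ℝ A] :
    A →ₗ[ℝ] A where
  toFun := star
  map_add' := star_add
  map_smul' r a := by rw [star_smul, star_trivial r, RingHom.id_apply]

lemma starLinearMap_apply {A : Type*} [Ring A] [StarRing A] [Algebra ℝ A] [StarModule ℝ A]
    (a : A) : starLinearMap A a = star a := rfl

/-- Symmetrizing a functional whose Gram matrix has positive definite quadratic form gives a
positive definite Gram matrix. -/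
lemma posDef_gram_add_comp_star {A I : Type*} [Ring A] [StarRing A] [Algebra ℝ A]
    [StarModule ℝ A] [Fintype I] (h : I → A) {L : A →ₗ[ℝ] ℝ}
    (hL : ∀ v ≠ 0, 0 < v ⬝ᵥ gram h L *ᵥ v) :
    (gram h (L + L ∘ₗ starLinearMap A)).PosDef := by
  have hstar : gram h (L ∘ₗ starLinearMap A) = (gram h L)ᵀ := by
    ext p q
    simp [gram_apply, starLinearMap_apply]
  rw [map_add, hstar]
  refine .of_dotProduct_mulVec_pos ?_ fun v hv => ?_
  · rw [IsHermitian, conjTranspose_eq_transpose_of_trivial, transpose_add, transpose_transpose,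
      add_comm]
  · rw [star_trivial, add_mulVec, dotProduct_add, mulVec_transpose, dotProduct_comm v (v ᵥ* _),
      ← dotProduct_mulVec]
    exact add_pos (hL v hv) (hL v hv)

/-- A hermitian matrix over the free algebra all of whose evaluations at symmetric matrices are
positive semidefinite is a sum of hermitian squares. -/
theorem exists_eq_sum_star_mul_self_of_evalForm_nonneg [Nonempty N]
    {F : Matrix N N (FreeAlgebra ℝ X)} (hF : star F = F)
    (hpos : ∀ (n : ℕ), 1 ≤ n → ∀ Y : X → Matrix (Fin n) (Fin n) ℝ, (∀ x, (Y x)ᵀ = Y x) →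
      ∀ v : N × Fin n → ℝ, 0 ≤ evalForm Y v F) :
    ∃ (m : ℕ) (G : Fin m → Matrix N N (FreeAlgebra ℝ X)), F = ∑ i, star (G i) * G i := by
  classical
  obtain ⟨r⟩ := ‹Nonempty N›
  obtain ⟨K, hK⟩ := exists_mem_span_single_word F
  obtain ⟨L₀, hL₀⟩ := exists_coercive_functional (X := X) r K
  have hpd (L : Matrix N N (FreeAlgebra ℝ X) →ₗ[ℝ] ℝ)
      (hL : ∀ v ≠ 0, 0 < v ⬝ᵥ gram (rowWord r K) L *ᵥ v) : 0 ≤ L F := by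
    obtain ⟨Y, v, hY, hYv⟩ := exists_evalForm_eq r K
      (L := L + L ∘ₗ starLinearMap _)
      (fun P => by simp [starLinearMap_apply, add_comm]) (posDef_gram_add_comp_star _ hL)
    have hFL := hYv F hK
    let e := Fintype.equivFin (N × BoundedWord X K)
    rw [← evalForm_reindex e, LinearMap.add_apply, LinearMap.comp_apply, starLinearMap_apply,
      hF] at hFL
    have := hpos _ (Fintype.card_pos_iff.mpr ⟨(r, emptyWord X K)⟩)
      (fun x => reindex e e (Y x)) (fun x => by rw [transpose_reindex, hY])
      (fun p => v (p.1, e.symm p.2))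
    linarith
  obtain ⟨G, hG⟩ := exists_eq_sum_star_mul_self (rowWord r K) L₀ hL₀ (F := F)
    (Submodule.span_le.mpr (by
      rintro _ ⟨⟨i, j, u⟩, rfl⟩
      refine Submodule.subset_span ⟨((i, emptyWord X K), (j, u)), ?_⟩
      simp [star_rowWord_mul_rowWord, emptyWord, word_nil]) hK)
    (fun L hL => by
      refine le_of_forall_pos_le_add fun ε hε => ?_
      have hδ : 0 < ε / (|L₀ F| + 1) := by positivity
      have h := hpd (L + (ε / (|L₀ F| + 1)) • L₀) fun v hv => by
        rw [map_add, map_smul, add_mulVec, dotProduct_add, smul_mulVec, dotProduct_smul]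
        have hvv : 0 < v ⬝ᵥ v := by simpa using dotProduct_star_self_pos_iff.mpr hv
        exact add_pos_of_nonneg_of_pos (hL v) (mul_pos hδ (hvv.trans_le (hL₀ v)))
      rw [LinearMap.add_apply, LinearMap.smul_apply, smul_eq_mul] at h
      refine h.trans (add_le_add le_rfl ?_)
      rw [div_mul_eq_mul_div, div_le_iff₀ (by positivity)]
      exact mul_le_mul_of_nonneg_left ((le_abs_self _).trans (by linarith)) hε.le)
  refine ⟨_, G ∘ (Fintype.equivFin _).symm, ?_⟩
  rw [hG]
  exact ((Fintype.equivFin _).symm.sum_comp fun b => star (G b) * G b).symm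

end Main

end NCSumOfSquares

/-- A hermitian matrix `F` over the free algebra `ℝ⟨x₁,…,x_d⟩` is
positive semidefinite at every tuple of symmetric real matrices (of every size `n ≥ 1`,
evaluated entrywise to give a `νn × νn` real block matrix) iff `F = Σ Gᵢ* Gᵢ` for finitely
many matrices `Gᵢ` over the free algebra. -/
theorem statement4 (ν d : ℕ) (hν : 1 ≤ ν) (hd : 1 ≤ d)
    (F : Matrix (Fin ν) (Fin ν) (FreeAlgebra ℝ (Fin d)))
    (hF : star F = F) :
    (∀ (n : ℕ), 1 ≤ n → ∀ X : Fin d → Matrix (Fin n) (Fin n) ℝ,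
        (∀ i, (X i)ᵀ = X i) →
        ∀ v : Fin ν × Fin n → ℝ,
          0 ≤ v ⬝ᵥ (Matrix.of fun p q : Fin ν × Fin n =>
              (FreeAlgebra.lift ℝ X (F p.1 q.1)) p.2 q.2).mulVec v) ↔
    (∃ (m : ℕ) (G : Fin m → Matrix (Fin ν) (Fin ν) (FreeAlgebra ℝ (Fin d))),
        F = ∑ i, star (G i) * G i) := by
  have : Nonempty (Fin ν) := ⟨⟨0, hν⟩⟩
  refine ⟨NCSumOfSquares.exists_eq_sum_star_mul_self_of_evalForm_nonneg hF, ?_⟩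
  rintro ⟨m, G, rfl⟩ n - X hX v
  exact NCSumOfSquares.blockEval_sum_star_mul_self_nonneg hX G v
end
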